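/- arXiv:1609.00135 — 8 statements merged into one kernel-verified Lean document; each statement's English description precedes it below -/
import Mathlib

section
/- Let x be a solution of the heavy ball equation with vanishing damping and source term g satisfying ∫₀^∞ (1+t)^{(α+1)/2} ‖g(t)‖ dt < ∞, and suppose Φ is even (Φ(−u) = Φ(u) for all u ∈ H). Then x(t) converges strongly in H (i.e. in norm) as t → +∞ to some x* ∈ argmin Φ. -/
open MeasureTheory Filter Real Set RealInnerProductSpace

lemma hb_ineq {f f' k : ℝ → ℝ} {a : ℝ} (hf : ∀ t, a ≤ t → HasDerivAt f (f' t) t)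
    (hk : IntegrableOn k (Ici a)) (hle : ∀ t, a ≤ t → f' t ≤ k t) {s t : ℝ}
    (has : a ≤ s) (hst : s ≤ t) : f t - f s ≤ ∫ y in s..t, k y := by
  apply intervalIntegral.sub_le_integral_of_hasDeriv_right_of_le hst (g' := f')
  · intro y hy
    exact (hf y (has.trans hy.1)).continuousAt.continuousWithinAt
  · intro y hy
    exact (hf y (has.trans hy.1.le)).hasDerivWithinAt
  · exact hk.mono_set (fun y hy => has.trans hy.1)
  · intro y hy
    exact hle y (has.trans hy.1.le)

lemma hb_int {k : ℝ → ℝ} {a : ℝ} (hk : IntegrableOn k (Ici a)) {s t : ℝ}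
    (has : a ≤ s) (hst : s ≤ t) : IntervalIntegrable k volume s t := by
  rw [intervalIntegrable_iff_integrableOn_Ioc_of_le hst]
  exact hk.mono_set (fun y hy => has.trans hy.1.le)

lemma hb_conv {f f' k : ℝ → ℝ} {a m : ℝ} (hf : ∀ t, a ≤ t → HasDerivAt f (f' t) t)
    (hk : IntegrableOn k (Ici a)) (hle : ∀ t, a ≤ t → f' t ≤ k t)
    (hm : ∀ t, a ≤ t → m ≤ f t) : ∃ l, Tendsto f atTop (nhds l) := by
  have hN : Tendsto (fun t => ∫ y in a..t, k y) atTop (nhds (∫ y in Ioi a, k y)) :=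
    intervalIntegral_tendsto_integral_Ioi a (hk.mono_set Ioi_subset_Ici_self) tendsto_id
  set N : ℝ → ℝ := fun t => ∫ y in a..t, k y with hNd
  have hNb : ∃ B, ∀ t, a ≤ t → N t ≤ B := by
    refine ⟨∫ y in Ici a, ‖k y‖, fun t ht => ?_⟩
    rw [hNd]
    simp only
    rw [intervalIntegral.integral_of_le ht]
    calc ∫ y in Ioc a t, k y ≤ ∫ y in Ioc a t, ‖k y‖ := by
          have hi := hk.mono_set (Ioc_subset_Icc_self.trans Icc_subset_Ici_self : Ioc a t ⊆ Ici a)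
          exact integral_mono hi hi.norm (fun y => le_abs_self _)
      _ ≤ _ := by
          apply setIntegral_mono_set hk.norm
          · exact Eventually.of_forall fun y => norm_nonneg _
          · exact (Ioc_subset_Icc_self.trans Icc_subset_Ici_self).eventuallyLE
  obtain ⟨B, hB⟩ := hNb
  have hanti : Antitone (fun t => f (max t a) - N (max t a)) := by
    intro s t hst
    have h1 : a ≤ max s a := le_max_right _ _
    have h2 : max s a ≤ max t a := max_le_max hst le_rfl
    have := hb_ineq hf hk hle h1 h2
    have h3 := intervalIntegral.integral_interval_sub_left (hb_int hk le_rfl (h1.trans h2))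
      (hb_int hk le_rfl h1)
    simp only [hNd]
    linarith
  have hl := tendsto_atTop_ciInf hanti ⟨m - B, by
    rintro _ ⟨t, rfl⟩
    have := hm _ (le_max_right t a)
    have := hB _ (le_max_right t a)
    simp only
    linarith⟩
  set l := ⨅ i, (f (max i a) - N (max i a))
  refine ⟨l + ∫ y in Ioi a, k y, ?_⟩
  refine (hl.add hN).congr' ?_
  filter_upwards [eventually_ge_atTop a] with t ht
  simp [max_eq_left ht, hNd]

lemma hb_cauchy {H : Type*} [NormedAddCommGroup H] [CompleteSpace H] {x : ℝ → H} {A B : ℝ → ℝ}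
    {a L : ℝ} (h : ∀ s t, a ≤ s → s ≤ t → ‖x s - x t‖ ^ 2 ≤ A s + B t)
    (hA : Tendsto A atTop (nhds L)) (hB : Tendsto B atTop (nhds (-L))) :
    ∃ y, Tendsto x atTop (nhds y) := by
  apply cauchySeq_tendsto_of_complete
  rw [Metric.cauchySeq_iff]
  intro ε hε
  have e1 : ∀ᶠ t in atTop, A t < L + ε ^ 2 / 2 := hA.eventually_lt_const (by
    have := pow_pos hε 2
    linarith)
  have e2 : ∀ᶠ t in atTop, B t < -L + ε ^ 2 / 2 := hB.eventually_lt_const (by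
    have := pow_pos hε 2
    linarith)
  obtain ⟨N, hN⟩ := eventually_atTop.1 (e1.and (e2.and (eventually_ge_atTop a)))
  have key : ∀ s t, N ≤ s → s ≤ t → dist (x s) (x t) < ε := by
    intro s t hs hst
    have h1 := (hN s hs)
    have h2 := (hN t (hs.trans hst))
    have h3 := h s t h1.2.2 hst
    rw [dist_eq_norm]
    apply lt_of_pow_lt_pow_left₀ 2 hε.le
    linarith [h1.1, h2.2.1]
  refine ⟨N, fun s hs t ht => ?_⟩
  rcases le_total s t with h1 | h1
  · exact key s t hs h1
  · rw [dist_comm]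
    exact key t s ht h1

lemma hb_grad {H : Type*} [NormedAddCommGroup H] [InnerProductSpace ℝ H] [CompleteSpace H]
    {Φ : H → ℝ} {Φ' : H → H} (hconv : ConvexOn ℝ Set.univ Φ)
    (hdiff : ∀ u : H, HasGradientAt Φ (Φ' u) u) (u w : H) :
    Φ u + ⟪Φ' u, w - u⟫ ≤ Φ w := by
  have hc : ConvexOn ℝ Set.univ (fun s : ℝ => Φ (AffineMap.lineMap u w s)) := by
    have := hconv.comp_affineMap (AffineMap.lineMap u w : ℝ →ᵃ[ℝ] H)
    rw [preimage_univ] at this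
    exact this
  have hd : HasDerivAt (fun s : ℝ => Φ (AffineMap.lineMap u w s)) ⟪Φ' u, w - u⟫ 0 := by
    have h1 : HasDerivAt (fun s : ℝ => (AffineMap.lineMap u w s : H)) (w - u) 0 :=
      AffineMap.hasDerivAt_lineMap
    have h2 := (hdiff u).hasFDerivAt
    have h3 : HasFDerivAt Φ ((InnerProductSpace.toDual ℝ H) (Φ' u)) (AffineMap.lineMap u w (0:ℝ)) := by
      simpa using h2
    exact (h3.comp_hasDerivAt (0:ℝ) h1).congr_deriv (by simp)
  have := hc.le_slope_of_hasDerivAt (mem_univ _) (mem_univ _) zero_lt_one hd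
  simp [slope] at this
  linarith

/-- derivative of the energy -/
lemma hb_energy {H : Type*} [NormedAddCommGroup H] [InnerProductSpace ℝ H] [CompleteSpace H]
    {Φ : H → ℝ} {Φ' : H → H} {Φ0 : ℝ}
    (hdiff : ∀ u : H, HasGradientAt Φ (Φ' u) u) {x x' x'' : ℝ → H} {t γ : ℝ} {g : H}
    (hx1 : HasDerivAt x (x' t) t) (hx2 : HasDerivAt x' (x'' t) t)
    (hode : x'' t + γ • x' t + Φ' (x t) = g) :
    HasDerivAt (fun t => 1 / 2 * ‖x' t‖ ^ 2 + (Φ (x t) - Φ0)) (-γ * ‖x' t‖ ^ 2 + ⟪g, x' t⟫) t := by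
  have h1 := (hdiff (x t)).hasFDerivAt.comp_hasDerivAt t hx1
  have h2 := hx2.norm_sq.const_mul (1 / 2 : ℝ)
  have h3 := h2.add (h1.sub_const Φ0)
  refine h3.congr_deriv ?_
  rw [← hode]
  simp [inner_add_left, inner_smul_left, real_inner_self_eq_norm_sq, real_inner_comm]
  ring

/-- derivative of the function theta -/
lemma hb_theta {H : Type*} [NormedAddCommGroup H] [InnerProductSpace ℝ H] [CompleteSpace H]
    {Φ : H → ℝ} {Φ' : H → H} {c α : ℝ} (hα0 : 0 ≤ α) (hα1 : α < 1)
    (hconv : ConvexOn ℝ Set.univ Φ)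
    (hdiff : ∀ u : H, HasGradientAt Φ (Φ' u) u)
    (heven : ∀ u : H, Φ (-u) = Φ u)
    {x x' x'' : ℝ → H} {A : ℝ → ℝ} {t : ℝ} {g : H} (ht : 0 ≤ t)
    (hA0 : 0 < A t) (hA : HasDerivAt A (α * A t / (1 + t)) t)
    (hx1 : HasDerivAt x (x' t) t) (hx2 : HasDerivAt x' (x'' t) t)
    (hode : x'' t + (c / A t) • x' t + Φ' (x t) = g) (z : H) :
    ∃ D, HasDerivAt (fun t => A t * ⟪x' t, x t + z⟫ + (c - α * (A t / (1 + t))) *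
      (1 / 2 * ‖x t + z‖ ^ 2)) D t ∧
      D ≤ A t * (‖x' t‖ ^ 2 + ‖g‖ * ‖x t + z‖ + Φ z - Φ (x t))
        + A t / (1 + t) ^ 2 * (1 / 2 * ‖x t + z‖ ^ 2) := by
  have hp : (0:ℝ) < 1 + t := by linarith
  have hz : HasDerivAt (fun t => x t + z) (x' t) t := hx1.add_const z
  have h1 := hA.mul (hx2.inner ℝ hz)
  have h2 := hz.norm_sq.const_mul (1 / 2 : ℝ)
  have hpd : HasDerivAt (fun t : ℝ => 1 + t) 1 t := (hasDerivAt_id t).const_add 1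
  have h3 := (((hA.div hpd hp.ne').const_mul α).const_sub c).mul h2
  refine ⟨_, h1.add h3, ?_⟩
  have hg := hb_grad hconv hdiff (x t) (-z)
  rw [heven] at hg
  have hx'' : x'' t = g - (c / A t) • x' t - Φ' (x t) := by
    rw [← hode]; abel
  have e1 : ⟪x'' t, x t + z⟫ = ⟪g, x t + z⟫ - c / A t * ⟪x' t, x t + z⟫ - ⟪Φ' (x t), x t + z⟫ := by
    rw [hx'']; simp [inner_sub_left, inner_smul_left]
  have e2 : ⟪Φ' (x t), -z - x t⟫ = - ⟪Φ' (x t), x t + z⟫ := by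
    rw [← inner_neg_right]; congr 1; abel
  have e3 := real_inner_le_norm g (x t + z)
  have e4 : ⟪x t + z, x' t⟫ = ⟪x' t, x t + z⟫ := real_inner_comm _ _
  rw [e2] at hg
  simp only [e1, e4, real_inner_self_eq_norm_sq]
  set I := ⟪x' t, x t + z⟫
  set h := 1 / 2 * ‖x t + z‖ ^ 2 with hh
  have hh0 : 0 ≤ h := by positivity
  have key : A t * (⟪g, x t + z⟫ - ⟪Φ' (x t), x t + z⟫) ≤
      A t * (‖g‖ * ‖x t + z‖ + Φ z - Φ (x t)) := by
    apply mul_le_mul_of_nonneg_left _ hA0.le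
    linarith
  have key2 : α * (1 - α) * (A t / (1 + t) ^ 2 * h) ≤ A t / (1 + t) ^ 2 * h := by
    apply mul_le_of_le_one_left (by positivity)
    nlinarith
  have id1 : α * A t / (1 + t) * I + A t * (‖x' t‖ ^ 2 +
      (⟪g, x t + z⟫ - c / A t * I - ⟪Φ' (x t), x t + z⟫)) +
      (-(α * ((α * A t / (1 + t) * (1 + t) - A t * 1) / (1 + t) ^ 2)) * h +
      (c - α * (A t / (1 + t))) * (1 / 2 * (2 * I))) =
      A t * ‖x' t‖ ^ 2 + A t * (⟪g, x t + z⟫ - ⟪Φ' (x t), x t + z⟫) +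
      α * (1 - α) * (A t / (1 + t) ^ 2 * h) := by
    field_simp
    ring
  refine (le_of_eq id1).trans ?_
  linarith

lemma hb_lower {c α p A S e X I : ℝ} (hα0 : 0 ≤ α) (hα1 : α < 1) (hp : 1 ≤ p)
    (hA : 0 < A) (hr : A / p ≤ c / 20) (he : 0 ≤ e) (hI : |I| ≤ S * X) :
    1 / 2 * (A * p * (1 / 2 * S ^ 2 + e)) + c / 2 * X ^ 2 ≤
      A * p * (1 / 2 * S ^ 2 + e) + 3 * (A * I + (c - α * (A / p)) * (1 / 2 * X ^ 2)) := by
  have hp0 : 0 < p := by linarith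
  have hr0 : 0 < A / p := by positivity
  set r := A / p with hrd
  have hAr : A = r * p := by rw [hrd]; field_simp
  have h1 : -(S * X) ≤ I := (abs_le.1 hI).1
  have h2 : A * -(S * X) ≤ A * I := mul_le_mul_of_nonneg_left h1 hA.le
  have h3 : 0 ≤ r * (1 / 2 * (p * S) - 3 * X) ^ 2 := by positivity
  have h4 : 0 ≤ A * p * e := by positivity
  have h5 : α * r * X ^ 2 ≤ c / 20 * X ^ 2 := by
    apply mul_le_mul_of_nonneg_right _ (sq_nonneg X)
    nlinarith
  have h6 : r * X ^ 2 ≤ c / 20 * X ^ 2 := mul_le_mul_of_nonneg_right hr (sq_nonneg X)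
  have h7 : 0 ≤ c / 20 * X ^ 2 := by
    have : 0 ≤ c / 20 := by linarith
    positivity
  have h8 : 0 ≤ A * p * S ^ 2 := by positivity
  rw [hAr] at h2 h4 h8 ⊢
  nlinarith

lemma hb_upper {c α p A w S e X G J F Dθ : ℝ} (hc : 0 < c) (hα1 : α < 1) (hp : 1 ≤ p)
    (hA : 0 < A) (hw : 0 < w) (hw2 : w ^ 2 = A * p) (hAw : A ≤ w)
    (hr : A / p ≤ c / 20) (he : 0 ≤ e) (hS : 0 ≤ S) (hX : 0 ≤ X) (hG : 0 ≤ G)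
    (hJ : J ≤ G * S)
    (hF : 1 / 2 * (A * p * (1 / 2 * S ^ 2 + e)) + c / 2 * X ^ 2 ≤ F)
    (hD : Dθ ≤ A * (S ^ 2 + G * X - e) + A / p ^ 2 * (1 / 2 * X ^ 2)) :
    (α + 1) * A * (1 / 2 * S ^ 2 + e) + A * p * (-(c / A) * S ^ 2 + J) + 3 * Dθ ≤
      -(A * (1 / 2 * S ^ 2 + e) + c / 2 * (p * S ^ 2)) +
        ((7 + 6 / c) * (w * G) + 3 / c * (A / p ^ 2)) * (1 + F) := by
  have hp0 : 0 < p := by linarith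
  have hE : 0 ≤ A * (1 / 2 * S ^ 2 + e) := by positivity
  have hF0 : 0 ≤ F := le_trans (by positivity) hF
  have hXF : X ^ 2 ≤ 2 / c * F := by
    have : c / 2 * X ^ 2 ≤ F := le_trans (le_add_of_nonneg_left (by positivity)) hF
    rw [div_mul_eq_mul_div, le_div_iff₀ hc]
    linarith
  have hSF : (w * S) ^ 2 ≤ 4 * F := by
    rw [mul_pow, hw2]
    have h1 : 0 ≤ A * p * e := by positivity
    have h2 : 0 ≤ c / 2 * X ^ 2 := by positivity
    nlinarith
  have hwS : w * S ≤ 4 * (1 + F) := by nlinarith [sq_nonneg (w * S - 1)]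
  have hX1 : X ≤ 1 + 2 / c * F := by nlinarith [sq_nonneg (X - 1)]
  have hcF : 0 ≤ 2 / c * F := by positivity
  have hc' : 0 < 2 / c := by positivity
  have t1 : A * p * J ≤ w * G * (4 * (1 + F)) := by
    calc A * p * J ≤ A * p * (G * S) := mul_le_mul_of_nonneg_left hJ (by positivity)
      _ = w * G * (w * S) := by rw [← hw2]; ring
      _ ≤ _ := mul_le_mul_of_nonneg_left hwS (by positivity)
  have t2 : A * (G * X) ≤ w * G * (1 + 2 / c * F) := by
    calc A * (G * X) ≤ w * (G * X) := mul_le_mul_of_nonneg_right hAw (by positivity)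
      _ = w * G * X := by ring
      _ ≤ _ := mul_le_mul_of_nonneg_left hX1 (by positivity)
  have t2' : w * G * (1 + 2 / c * F) ≤ w * G * ((1 + 2 / c) * (1 + F)) := by
    apply mul_le_mul_of_nonneg_left _ (by positivity)
    nlinarith
  have t3 : A / p ^ 2 * (1 / 2 * X ^ 2) ≤ A / p ^ 2 * (1 / c * (1 + F)) := by
    apply mul_le_mul_of_nonneg_left _ (by positivity)
    have : 2 / c * F = 2 * (1 / c * F) := by ring
    have : 0 < 1 / c := by positivity
    nlinarith
  have t4 : A * p * (-(c / A) * S ^ 2) = - (c * (p * S ^ 2)) := by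
    field_simp
  have t5 : A * S ^ 2 ≤ c / 20 * (p * S ^ 2) := by
    have : A ≤ c / 20 * p := by rwa [div_le_iff₀ hp0] at hr
    calc A * S ^ 2 ≤ c / 20 * p * S ^ 2 := mul_le_mul_of_nonneg_right this (sq_nonneg S)
      _ = _ := by ring
  have t6 : α * (A * (1 / 2 * S ^ 2 + e)) ≤ 1 * (A * (1 / 2 * S ^ 2 + e)) :=
    mul_le_mul_of_nonneg_right hα1.le hE
  have t7 : 0 ≤ c * (p * S ^ 2) := by positivity
  have t8 : ((7 + 6 / c) * (w * G) + 3 / c * (A / p ^ 2)) * (1 + F) =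
    w * G * (4 * (1 + F)) + 3 * (w * G * ((1 + 2 / c) * (1 + F))) +
      3 * (A / p ^ 2 * (1 / c * (1 + F))) := by ring
  rw [t8, mul_add (A * p), t4]
  linarith

lemma hb_ibound {k : ℝ → ℝ} {a : ℝ} (hk : IntegrableOn k (Ici a)) {t : ℝ} (ht : a ≤ t) :
    ∫ y in a..t, k y ≤ ∫ y in Ici a, ‖k y‖ := by
  rw [intervalIntegral.integral_of_le ht]
  calc ∫ y in Ioc a t, k y ≤ ∫ y in Ioc a t, ‖k y‖ := by
        have hi := hk.mono_set (Ioc_subset_Icc_self.trans Icc_subset_Ici_self : Ioc a t ⊆ Ici a)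
        exact integral_mono hi hi.norm (fun y => le_abs_self _)
    _ ≤ _ := by
        apply setIntegral_mono_set hk.norm
        · exact Eventually.of_forall fun y => norm_nonneg _
        · exact (Ioc_subset_Icc_self.trans Icc_subset_Ici_self).eventuallyLE

lemma hb_gronwall {F F' u k : ℝ → ℝ} {a : ℝ} (hF : ∀ t, a ≤ t → HasDerivAt F (F' t) t)
    (hF0 : ∀ t, a ≤ t → 0 ≤ F t) (hu0 : ∀ t, a ≤ t → 0 ≤ u t) (huc : ContinuousOn u (Ici a))
    (hk0 : ∀ t, a ≤ t → 0 ≤ k t) (hk : IntegrableOn k (Ici a))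
    (hle : ∀ t, a ≤ t → F' t ≤ -u t + k t * (1 + F t)) :
    (∃ B, ∀ t, a ≤ t → F t ≤ B) ∧ IntegrableOn u (Ici a) := by
  have h1 : ∃ B, ∀ t, a ≤ t → F t ≤ B := by
    refine ⟨exp (log (1 + F a) + ∫ y in Ici a, ‖k y‖), fun t ht => ?_⟩
    have hd : ∀ t, a ≤ t → HasDerivAt (fun t => log (1 + F t)) (F' t / (1 + F t)) t := by
      intro t ht
      exact ((hF t ht).const_add 1).log (by linarith [hF0 t ht])
    have := hb_ineq hd hk (fun t ht => by
      rw [div_le_iff₀ (by linarith [hF0 t ht])]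
      linarith [hle t ht, hu0 t ht]) le_rfl ht
    have h2 := hb_ibound hk ht
    have h3 : log (1 + F t) ≤ log (1 + F a) + ∫ y in Ici a, ‖k y‖ := by linarith
    rw [log_le_iff_le_exp (by linarith [hF0 t ht])] at h3
    linarith
  refine ⟨h1, ?_⟩
  obtain ⟨B, hB⟩ := h1
  rw [integrableOn_Ici_iff_integrableOn_Ioi]
  have hui : ∀ t, IntegrableOn u (Icc a t) := fun t =>
    (huc.mono Icc_subset_Ici_self).integrableOn_Icc
  refine integrableOn_Ioi_of_intervalIntegral_norm_bounded
    (F a + ∫ y in Ici a, ‖k y * (1 + B)‖) a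
    (fun t => (hui t).mono_set Ioc_subset_Icc_self) tendsto_id ?_
  filter_upwards [eventually_ge_atTop a] with t ht
  have hkB : IntegrableOn (fun y => k y * (1 + B)) (Ici a) := hk.mul_const _
  have hi1 : IntervalIntegrable u volume a t := by
    rw [intervalIntegrable_iff_integrableOn_Ioc_of_le ht]
    exact (hui t).mono_set Ioc_subset_Icc_self
  have hi2 := hb_int hkB le_rfl ht
  have h4 : F t - F a ≤ ∫ y in a..t, (-u y + k y * (1 + B)) := by
    apply intervalIntegral.sub_le_integral_of_hasDeriv_right_of_le ht (g' := F')
    · intro y hy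
      exact (hF y hy.1).continuousAt.continuousWithinAt
    · intro y hy
      exact (hF y hy.1.le).hasDerivWithinAt
    · exact (hui t).neg.add (hkB.mono_set Icc_subset_Ici_self)
    · intro y hy
      have := hle y hy.1.le
      have h5 : k y * (1 + F y) ≤ k y * (1 + B) :=
        mul_le_mul_of_nonneg_left (by linarith [hB y hy.1.le]) (hk0 y hy.1.le)
      linarith
  have hi1n : IntervalIntegrable (fun y => -u y) volume a t := hi1.neg
  rw [intervalIntegral.integral_add hi1n hi2, intervalIntegral.integral_neg] at h4
  have h6 := hb_ibound hkB ht
  have h7 : ∫ y in a..t, ‖u y‖ = ∫ y in a..t, u y := by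
    apply intervalIntegral.integral_congr
    intro y hy
    rw [uIcc_of_le ht] at hy
    simp [abs_of_nonneg (hu0 y hy.1)]
  rw [h7]
  linarith [hF0 t ht]

lemma hb_zero {y u : ℝ → ℝ} {a L : ℝ} (hy0 : ∀ t, a ≤ t → 0 ≤ y t)
    (hy : Tendsto y atTop (nhds L)) (hu : IntegrableOn u (Ici a))
    (hle : ∀ t, a ≤ t → y t / (1 + t) ≤ u t) : L = 0 := by
  have hL : 0 ≤ L := ge_of_tendsto hy (by
    filter_upwards [eventually_ge_atTop a] with t ht using hy0 t ht)
  by_contra hne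
  have hpos : 0 < L := lt_of_le_of_ne hL (Ne.symm hne)
  obtain ⟨N, hN⟩ := eventually_atTop.1 ((hy.eventually_const_lt (half_lt_self hpos)).and
    ((eventually_ge_atTop a).and (eventually_ge_atTop 0)))
  have hN0 := (hN N le_rfl).2.2
  have hNa := (hN N le_rfl).2.1
  obtain ⟨l, hl⟩ := hb_conv (f := fun t => L / 2 * log (1 + t)) (f' := fun t => L / 2 * (1 / (1 + t)))
    (k := u) (a := N) (m := 0)
    (fun t ht => (((hasDerivAt_id t).const_add 1).log (by simp only [id]; linarith)).const_mul _)
    (hu.mono_set (Ici_subset_Ici.2 hNa))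
    (fun t ht => by
      refine le_trans ?_ (hle t (hNa.trans ht))
      rw [mul_one_div]
      exact div_le_div_of_nonneg_right (hN t ht).1.le (by linarith))
    (fun t ht => mul_nonneg (by linarith) (log_nonneg (by linarith)))
  refine not_tendsto_nhds_of_tendsto_atTop ?_ l hl
  exact (tendsto_log_atTop.comp (tendsto_atTop_add_const_left _ 1 tendsto_id)).const_mul_atTop
    (by linarith)

theorem heavy_ball_strong_convergence_even
    {H : Type*} [NormedAddCommGroup H] [InnerProductSpace ℝ H] [CompleteSpace H]
    (c α : ℝ) (hc : 0 < c) (hα0 : 0 ≤ α) (hα1 : α < 1)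
    (Φ : H → ℝ) (Φ' : H → H) (Φstar : ℝ)
    (hΦconv : ConvexOn ℝ Set.univ Φ)
    (hΦdiff : ∀ u : H, HasGradientAt Φ (Φ' u) u)
    (hΦcont : Continuous Φ')
    (hargmin : {v : H | ∀ u, Φ v ≤ Φ u}.Nonempty)
    (hΦstar : ∀ v ∈ {v : H | ∀ u, Φ v ≤ Φ u}, Φ v = Φstar)
    (g : ℝ → H) (hg : IntegrableOn g (Ici (0:ℝ)))
    (x x' x'' : ℝ → H)
    (hx1 : ∀ t ∈ Ici (0:ℝ), HasDerivAt x (x' t) t)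
    (hx2 : ∀ t ∈ Ici (0:ℝ), HasDerivAt x' (x'' t) t)
    (hode : ∀ t ∈ Ici (0:ℝ),
      x'' t + (c / (1 + t) ^ α) • x' t + Φ' (x t) = g t)
    (hgν : IntegrableOn (fun t => (1 + t) ^ ((α + 1) / 2) * ‖g t‖) (Ici (0:ℝ)))
    (heven : ∀ u : H, Φ (-u) = Φ u) :
    ∃ xstar ∈ {v : H | ∀ u, Φ v ≤ Φ u}, Tendsto x atTop (nhds xstar) := by
  -- zero is a minimizer
  have h0min : ∀ u, Φ 0 ≤ Φ u := by
    obtain ⟨v, hv⟩ := hargmin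
    intro u
    have h1 := hb_grad hΦconv hΦdiff 0 v
    have h2 := hb_grad hΦconv hΦdiff 0 (-v)
    rw [heven] at h2
    simp only [sub_zero, inner_neg_right] at h1 h2
    linarith [hv u]
  set A : ℝ → ℝ := fun t => (1 + t) ^ α with hAdef
  set w : ℝ → ℝ := fun t => (1 + t) ^ ((α + 1) / 2) with hwdef
  have hA0 : ∀ t, 0 ≤ t → 0 < A t := fun t ht => rpow_pos_of_pos (by linarith) _
  have hw0 : ∀ t, 0 ≤ t → 0 < w t := fun t ht => rpow_pos_of_pos (by linarith) _
  have hw2 : ∀ t, 0 ≤ t → w t ^ 2 = A t * (1 + t) := by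
    intro t ht
    have hp : (0:ℝ) < 1 + t := by linarith
    simp only [hAdef, hwdef]
    rw [← rpow_natCast, ← rpow_mul hp.le, ← rpow_add_one hp.ne']
    congr 1
    push_cast
    ring
  have hAw : ∀ t, 0 ≤ t → A t ≤ w t := fun t ht =>
    rpow_le_rpow_of_exponent_le (by linarith) (by linarith)
  have hAp : ∀ t, 0 ≤ t → A t ≤ 1 + t := fun t ht => by
    calc A t ≤ (1 + t) ^ (1:ℝ) := rpow_le_rpow_of_exponent_le (by linarith) (by linarith)
      _ = 1 + t := rpow_one _
  have hAmono : ∀ s t, 0 ≤ s → s ≤ t → A s ≤ A t := fun s t hs hst =>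
    rpow_le_rpow (by linarith) (by linarith) hα0
  have hAd : ∀ t, 0 ≤ t → HasDerivAt A (α * A t / (1 + t)) t := by
    intro t ht
    have hp : (0:ℝ) < 1 + t := by linarith
    have := ((hasDerivAt_id t).const_add 1).rpow_const (p := α) (Or.inl (by simpa using hp.ne'))
    refine this.congr_deriv ?_
    simp only [id, hAdef, rpow_sub_one hp.ne']
    ring
  have hr : Tendsto (fun t => A t / (1 + t)) atTop (nhds 0) := by
    have h1 : Tendsto (fun t : ℝ => (1 + t) ^ (-(1 - α))) atTop (nhds 0) :=
      (tendsto_rpow_neg_atTop (by linarith : 0 < 1 - α)).comp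
        (tendsto_atTop_add_const_left _ 1 tendsto_id)
    refine h1.congr' ?_
    filter_upwards [eventually_ge_atTop 0] with t ht
    have hp : (0:ℝ) < 1 + t := by linarith
    rw [neg_sub, rpow_sub_one hp.ne']
  have hAi : IntegrableOn (fun t => A t / (1 + t) ^ 2) (Ici 0) := by
    rw [integrableOn_Ici_iff_integrableOn_Ioi]
    have h1 : IntegrableOn (fun t : ℝ => (t + 1) ^ (α - 2)) (Ioi 0) :=
      integrableOn_add_rpow_Ioi_of_lt (by linarith) (by norm_num)
    refine h1.congr_fun ?_ measurableSet_Ioi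
    intro t ht
    have hp : (0:ℝ) < 1 + t := by linarith [mem_Ioi.1 ht]
    simp only [hAdef]
    rw [add_comm t 1, rpow_sub hp, rpow_two]
  -- starting time
  obtain ⟨a, ha⟩ : ∃ a, ∀ t, a ≤ t → A t / (1 + t) ≤ c / 20 ∧ 0 ≤ t := by
    have h1 := hr.eventually_lt_const (by positivity : 0 < c / 20)
    obtain ⟨a, ha⟩ := eventually_atTop.1 (h1.and (eventually_ge_atTop 0))
    exact ⟨a, fun t ht => ⟨(ha t ht).1.le, (ha t ht).2⟩⟩
  have ha0 : 0 ≤ a := (ha a le_rfl).2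
  have hsub : Ici a ⊆ Ici (0:ℝ) := Ici_subset_Ici.2 ha0
  set E : ℝ → ℝ := fun t => 1 / 2 * ‖x' t‖ ^ 2 + (Φ (x t) - Φ 0) with hEdef
  set θ : H → ℝ → ℝ := fun z t => A t * ⟪x' t, x t + z⟫ + (c - α * (A t / (1 + t))) *
      (1 / 2 * ‖x t + z‖ ^ 2) with hθdef
  have he0 : ∀ t, 0 ≤ Φ (x t) - Φ 0 := fun t => by linarith [h0min (x t)]
  have hE0 : ∀ t, 0 ≤ E t := fun t => by
    have := he0 t
    positivity
  have hEd : ∀ t, 0 ≤ t → HasDerivAt E (-(c / A t) * ‖x' t‖ ^ 2 + ⟪g t, x' t⟫) t := fun t ht =>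
    hb_energy hΦdiff (hx1 t ht) (hx2 t ht) (hode t ht)
  have hpd : ∀ t : ℝ, HasDerivAt (fun t : ℝ => 1 + t) 1 t := fun t =>
    (hasDerivAt_id t).const_add 1
  have hyd : ∀ t, 0 ≤ t → HasDerivAt (fun t => A t * (1 + t) * E t)
      ((α + 1) * A t * E t + A t * (1 + t) * (-(c / A t) * ‖x' t‖ ^ 2 + ⟪g t, x' t⟫)) t := by
    intro t ht
    have hp : (0:ℝ) < 1 + t := by linarith
    refine (((hAd t ht).mul (hpd t)).mul (hEd t ht)).congr_deriv ?_
    simp only [Pi.mul_apply]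
    congr 1
    field_simp
  have hθd : ∀ z t, 0 ≤ t → ∃ D, HasDerivAt (θ z) D t ∧
      D ≤ A t * (‖x' t‖ ^ 2 + ‖g t‖ * ‖x t + z‖ + Φ z - Φ (x t))
        + A t / (1 + t) ^ 2 * (1 / 2 * ‖x t + z‖ ^ 2) := fun z t ht =>
    hb_theta hα0 hα1 hΦconv hΦdiff heven ht (hA0 t ht) (hAd t ht) (hx1 t ht) (hx2 t ht)
      (hode t ht) z
  choose! Dθ hDθ hDθle using hθd
  -- Lyapunov function
  set F : ℝ → ℝ := fun t => A t * (1 + t) * E t + 3 * θ 0 t with hFdef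
  have hlow : ∀ t, a ≤ t → 1 / 2 * (A t * (1 + t) * E t) + c / 2 * ‖x t‖ ^ 2 ≤ F t := by
    intro t ht
    obtain ⟨h1, h2⟩ := ha t ht
    simp only [hFdef, hθdef, add_zero]
    exact hb_lower hα0 hα1 (by linarith) (hA0 t h2) h1 (he0 t) (abs_real_inner_le_norm _ _)
  have hF0 : ∀ t, a ≤ t → 0 ≤ F t := fun t ht => by
    have h1 := hA0 t (ha t ht).2
    have h2 := (ha t ht).2
    have h3 := hE0 t
    exact le_trans (by positivity) (hlow t ht)
  have hFd : ∀ t, a ≤ t → HasDerivAt F ((α + 1) * A t * E t + A t * (1 + t) *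
      (-(c / A t) * ‖x' t‖ ^ 2 + ⟪g t, x' t⟫) + 3 * Dθ 0 t) t := fun t ht =>
    (hyd t (ha t ht).2).add ((hDθ 0 t (ha t ht).2).const_mul 3)
  set u : ℝ → ℝ := fun t => A t * E t + c / 2 * ((1 + t) * ‖x' t‖ ^ 2) with hudef
  have hu0 : ∀ t, a ≤ t → 0 ≤ u t := fun t ht => by
    have h1 := hA0 t (ha t ht).2
    have h2 := (ha t ht).2
    have h3 := hE0 t
    positivity
  have huc : ContinuousOn u (Ici a) := by
    intro t ht
    have h2 := (ha t ht).2
    have c1 := (hAd t h2).continuousAt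
    have c2 := (hEd t h2).continuousAt
    have c3 := (hx2 t h2).continuousAt
    have c4 := (hpd t).continuousAt
    exact ((c1.mul c2).add ((c4.mul (c3.norm.pow 2)).const_mul (c / 2))).continuousWithinAt
  have hwg : IntegrableOn (fun t => w t * ‖g t‖) (Ici a) := hgν.mono_set hsub
  have hAi' := hAi.mono_set hsub
  have hkk : IntegrableOn (fun t => (7 + 6 / c) * (w t * ‖g t‖) + 3 / c * (A t / (1 + t) ^ 2))
      (Ici a) := by
    have h1 : IntegrableOn (fun t => (7 + 6 / c) * (w t * ‖g t‖)) (Ici a) := hwg.const_mul _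
    have h2 : IntegrableOn (fun t => 3 / c * (A t / (1 + t) ^ 2)) (Ici a) := hAi'.const_mul _
    exact h1.add h2
  obtain ⟨⟨B, hB⟩, hui⟩ := hb_gronwall (F := F) (u := u)
    (k := fun t => (7 + 6 / c) * (w t * ‖g t‖) + 3 / c * (A t / (1 + t) ^ 2)) hFd hF0 hu0 huc
    (fun t ht => by
      have h1 := hA0 t (ha t ht).2
      have h2 := hw0 t (ha t ht).2
      positivity)
    hkk
    (fun t ht => by
      obtain ⟨h1, h2⟩ := ha t ht
      have h3 := hDθle 0 t h2
      simp only [add_zero] at h3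
      exact hb_upper hc hα1 (by linarith) (hA0 t h2) (hw0 t h2) (hw2 t h2) (hAw t h2) h1
        (he0 t) (norm_nonneg _) (norm_nonneg (x t)) (norm_nonneg (g t)) (real_inner_le_norm _ _)
        (hlow t ht) (by linarith))
  have hB0 : 0 ≤ B := (hF0 a le_rfl).trans (hB a le_rfl)
  -- bounds
  obtain ⟨R, hR0, hR⟩ : ∃ R, 0 ≤ R ∧ ∀ t, a ≤ t → ‖x t‖ ≤ R := by
    refine ⟨√(2 / c * B), sqrt_nonneg _, fun t ht => ?_⟩
    apply le_sqrt_of_sq_le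
    have h1 := hA0 t (ha t ht).2
    have h2 := (ha t ht).2
    have h3 := hE0 t
    have h4 : 0 ≤ 1 / 2 * (A t * (1 + t) * E t) := by positivity
    rw [div_mul_eq_mul_div, le_div_iff₀ hc]
    linarith [hlow t ht, hB t ht]
  have hwx : ∀ t, a ≤ t → w t * ‖x' t‖ ≤ √(4 * B) := by
    intro t ht
    apply le_sqrt_of_sq_le
    have h1 := hA0 t (ha t ht).2
    have h2 := (ha t ht).2
    rw [mul_pow, hw2 t h2]
    have h3 : 0 ≤ A t * (1 + t) * (Φ (x t) - Φ 0) := mul_nonneg (by positivity) (he0 t)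
    have h4 : 0 ≤ c / 2 * ‖x t‖ ^ 2 := by positivity
    have h5 := (hlow t ht).trans (hB t ht)
    simp only [hEdef] at h5
    linarith
  -- y tends to zero
  set y : ℝ → ℝ := fun t => A t * (1 + t) * E t with hydef
  have hy0 : ∀ t, a ≤ t → 0 ≤ y t := fun t ht => by
    have h1 := hA0 t (ha t ht).2
    have h2 := (ha t ht).2
    have h3 := hE0 t
    positivity
  have hy : Tendsto y atTop (nhds 0) := by
    obtain ⟨l, hl⟩ := hb_conv (f := y) (k := fun t => 2 * u t + √(4 * B) * (w t * ‖g t‖))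
      (fun t ht => hyd t (ha t ht).2) (Integrable.add (hui.const_mul 2) (hwg.const_mul (√(4 * B))))
      (fun t ht => by
        have h1 := hA0 t (ha t ht).2
        have h2 := (ha t ht).2
        have h3 := hE0 t
        have h4 := hw0 t h2
        have h5 : ⟪g t, x' t⟫ ≤ ‖g t‖ * ‖x' t‖ := real_inner_le_norm _ _
        have h6 : A t * (1 + t) * ⟪g t, x' t⟫ ≤ √(4 * B) * (w t * ‖g t‖) := by
          rw [← hw2 t h2]
          calc w t ^ 2 * ⟪g t, x' t⟫ ≤ w t ^ 2 * (‖g t‖ * ‖x' t‖) :=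
                mul_le_mul_of_nonneg_left h5 (by positivity)
            _ = (w t * ‖x' t‖) * (w t * ‖g t‖) := by ring
            _ ≤ _ := mul_le_mul_of_nonneg_right (hwx t ht) (by positivity)
        have h7 : 0 ≤ A t * (1 + t) * ((c / A t) * ‖x' t‖ ^ 2) := by positivity
        have h8 : α * (A t * E t) ≤ 1 * (A t * E t) :=
          mul_le_mul_of_nonneg_right hα1.le (by positivity)
        have h9 : 0 ≤ c / 2 * ((1 + t) * ‖x' t‖ ^ 2) := by positivity
        simp only [hudef]
        linarith) hy0
    have := hb_zero hy0 hl hui (fun t ht => by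
      have h2 := (ha t ht).2
      have hp : (0:ℝ) < 1 + t := by linarith
      have h9 : 0 ≤ c / 2 * ((1 + t) * ‖x' t‖ ^ 2) := by positivity
      have : y t / (1 + t) = A t * E t := by
        simp only [hydef]
        field_simp
      rw [this]
      simp only [hudef]
      linarith)
    rwa [this] at hl
  -- the weighted speed tends to zero
  have hwp : Tendsto (fun t => √(A t / (1 + t))) atTop (nhds 0) := by
    have := hr.sqrt
    simpa using this
  have hρ : Tendsto (fun t => A t * ‖x' t‖) atTop (nhds 0) := by
    have h1 : Tendsto (fun t => √(4 * B) * √(A t / (1 + t))) atTop (nhds 0) := by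
      simpa using hwp.const_mul (√(4 * B))
    refine squeeze_zero' ?_ ?_ h1
    · filter_upwards [eventually_ge_atTop a] with t ht
      exact mul_nonneg (hA0 t (ha t ht).2).le (norm_nonneg _)
    · filter_upwards [eventually_ge_atTop a] with t ht
      have h1 := hA0 t (ha t ht).2
      have h2 := (ha t ht).2
      have h3 := hw0 t h2
      have hp : (0:ℝ) < 1 + t := by linarith
      have h4 : √(A t / (1 + t)) = w t / (1 + t) := by
        rw [sqrt_eq_iff_mul_self_eq (by positivity) (by positivity)]
        have := hw2 t h2
        field_simp
        linarith
      have h5 : A t * ‖x' t‖ = (w t * ‖x' t‖) * (w t / (1 + t)) := by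
        have := hw2 t h2
        field_simp
        linear_combination -‖x' t‖ * this
      rw [h4, h5]
      exact mul_le_mul_of_nonneg_right (hwx t ht) (by positivity)
  -- the integrable bound
  set k1 : ℝ → ℝ := fun t => 2 / c * u t + 2 * R * (w t * ‖g t‖) + 2 * R ^ 2 * (A t / (1 + t) ^ 2)
    with hk1def
  have hk1 : IntegrableOn k1 (Ici a) :=
    ((hui.const_mul (2 / c)).add (hwg.const_mul (2 * R))).add (hAi'.const_mul (2 * R ^ 2))
  have hDk : ∀ z, ‖z‖ ≤ R → ∀ t, a ≤ t → Dθ z t ≤ k1 t + A t * (Φ z - Φ 0) := by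
    intro z hz t ht
    have h1 := hA0 t (ha t ht).2
    have h2 := (ha t ht).2
    have h3 := hw0 t h2
    have hp : (0:ℝ) < 1 + t := by linarith
    have hxz : ‖x t + z‖ ≤ 2 * R := (norm_add_le _ _).trans (by linarith [hR t ht])
    have h4 := hDθle z t h2
    have b1 : A t * ‖x' t‖ ^ 2 ≤ 2 / c * u t := by
      have h5 : A t * ‖x' t‖ ^ 2 ≤ (1 + t) * ‖x' t‖ ^ 2 :=
        mul_le_mul_of_nonneg_right (hAp t h2) (by positivity)
      have h6 : 0 ≤ 2 / c * (A t * E t) := mul_nonneg (by positivity) (mul_nonneg h1.le (hE0 t))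
      have h7 : 2 / c * u t = 2 / c * (A t * E t) + (1 + t) * ‖x' t‖ ^ 2 := by
        simp only [hudef]
        field_simp
      linarith
    have b2 : A t * (‖g t‖ * ‖x t + z‖) ≤ 2 * R * (w t * ‖g t‖) := by
      calc A t * (‖g t‖ * ‖x t + z‖) ≤ w t * (‖g t‖ * (2 * R)) := by
            have := hAw t h2
            gcongr
        _ = _ := by ring
    have b3 : A t / (1 + t) ^ 2 * (1 / 2 * ‖x t + z‖ ^ 2) ≤ 2 * R ^ 2 * (A t / (1 + t) ^ 2) := by
      calc A t / (1 + t) ^ 2 * (1 / 2 * ‖x t + z‖ ^ 2)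
          ≤ A t / (1 + t) ^ 2 * (1 / 2 * (2 * R) ^ 2) := by gcongr
        _ = _ := by ring
    have b4 : A t * (Φ z - Φ (x t)) ≤ A t * (Φ z - Φ 0) :=
      mul_le_mul_of_nonneg_left (by linarith [he0 t]) h1.le
    simp only [hk1def]
    linarith
  have hinner : ∀ z, ‖z‖ ≤ R → ∀ t, a ≤ t → |A t * ⟪x' t, x t + z⟫| ≤ 2 * R * (A t * ‖x' t‖) := by
    intro z hz t ht
    have h1 := hA0 t (ha t ht).2
    have hxz : ‖x t + z‖ ≤ 2 * R := (norm_add_le _ _).trans (by linarith [hR t ht])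
    rw [abs_mul, abs_of_pos h1]
    calc A t * |⟪x' t, x t + z⟫| ≤ A t * (‖x' t‖ * ‖x t + z‖) := by
          gcongr
          exact abs_real_inner_le_norm _ _
      _ ≤ A t * (‖x' t‖ * (2 * R)) := by gcongr
      _ = _ := by ring
  have hquad : ∀ z, ‖z‖ ≤ R → ∀ t, a ≤ t → α * (A t / (1 + t)) * (1 / 2 * ‖x t + z‖ ^ 2) ≤
      2 * R ^ 2 * (A t / (1 + t)) := by
    intro z hz t ht
    have h1 := hA0 t (ha t ht).2
    have h2 := (ha t ht).2
    have hxz : ‖x t + z‖ ≤ 2 * R := (norm_add_le _ _).trans (by linarith [hR t ht])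
    calc α * (A t / (1 + t)) * (1 / 2 * ‖x t + z‖ ^ 2)
        ≤ 1 * (A t / (1 + t)) * (1 / 2 * (2 * R) ^ 2) := by gcongr
      _ = _ := by ring
  have hquad0 : ∀ z t, a ≤ t → 0 ≤ α * (A t / (1 + t)) * (1 / 2 * ‖x t + z‖ ^ 2) := by
    intro z t ht
    have h1 := hA0 t (ha t ht).2
    have h2 := (ha t ht).2
    positivity
  have hz0 : ‖(0:H)‖ ≤ R := by simpa using hR0
  -- error term
  set Q : ℝ → ℝ := fun t => y t + 2 * R * (A t * ‖x' t‖) + 2 * R ^ 2 * (A t / (1 + t)) with hQdef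
  have hQ : Tendsto Q atTop (nhds 0) := by
    have := (hy.add (hρ.const_mul (2 * R))).add (hr.const_mul (2 * R ^ 2))
    simpa using this
  -- convergence of the norm
  obtain ⟨l, hl⟩ : ∃ l, Tendsto (fun t => c * ‖x t‖ ^ 2) atTop (nhds l) := by
    obtain ⟨b, hb⟩ : ∃ b, ∀ t, b ≤ t → a ≤ t ∧ Q t < 1 := by
      obtain ⟨b, hb⟩ := eventually_atTop.1 ((eventually_ge_atTop a).and
        (hQ.eventually_lt_const zero_lt_one))
      exact ⟨b, hb⟩
    have hab := (hb b le_rfl).1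
    have hcmp : ∀ t, a ≤ t → |θ 0 t - c * (1 / 2 * ‖x t‖ ^ 2)| ≤ Q t := by
      intro t ht
      have h1 := abs_le.1 (hinner 0 hz0 t ht)
      have h2 := hquad 0 hz0 t ht
      have h3 := hquad0 0 t ht
      have h4 := hy0 t ht
      have h5 : 0 ≤ 2 * R ^ 2 * (A t / (1 + t)) := h3.trans h2
      have h6 : 0 ≤ 2 * R * (A t * ‖x' t‖) := (abs_nonneg _).trans (hinner 0 hz0 t ht)
      simp only [add_zero] at h1 h2 h3
      simp only [hθdef, hQdef, add_zero]
      rw [abs_le]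
      constructor <;> linarith
    obtain ⟨l, hl⟩ := hb_conv (f := θ 0) (f' := Dθ 0) (k := k1) (a := b) (m := -1)
      (fun t ht => hDθ 0 t (ha t (hab.trans ht)).2)
      (hk1.mono_set (Ici_subset_Ici.2 hab))
      (fun t ht => by simpa using hDk 0 hz0 t (hab.trans ht))
      (fun t ht => by
        have h1 := abs_le.1 (hcmp t (hab.trans ht))
        have h2 := (hb t ht).2
        have h3 : 0 ≤ c * (1 / 2 * ‖x t‖ ^ 2) := by positivity
        linarith)
    have hdz : Tendsto (fun t => θ 0 t - c * (1 / 2 * ‖x t‖ ^ 2)) atTop (nhds 0) :=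
      squeeze_zero_norm' (by
        filter_upwards [eventually_ge_atTop a] with t ht
        exact hcmp t ht) hQ
    refine ⟨2 * (l - 0), ((hl.sub hdz).const_mul 2).congr ?_⟩
    intro t
    ring
  -- Cauchy
  set N : ℝ → ℝ := fun t => ∫ s in a..t, k1 s with hNdef
  have hN : Tendsto N atTop (nhds (∫ s in Ioi a, k1 s)) :=
    intervalIntegral_tendsto_integral_Ioi a (hk1.mono_set Ioi_subset_Ici_self) tendsto_id
  set n := ∫ s in Ioi a, k1 s
  have hcau : ∀ s t, a ≤ s → s ≤ t → ‖x s - x t‖ ^ 2 ≤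
      2 / c * (c * ‖x s‖ ^ 2 - N s + Q s) + 2 / c * (-(c * ‖x t‖ ^ 2) + N t + Q t) := by
    intro s t hs hst
    have ht := hs.trans hst
    have hs0 := (ha s hs).2
    have ht0 := (ha t ht).2
    have hz := hR t ht
    set z := x t with hzdef
    have hAt := hA0 t ht0
    have i1 : θ z t - θ z s ≤ ∫ v in s..t, (k1 v + A t * (Φ z - Φ 0)) := by
      apply intervalIntegral.sub_le_integral_of_hasDeriv_right_of_le hst (g' := Dθ z)
      · intro v hv
        exact (hDθ z v (hs0.trans hv.1)).continuousAt.continuousWithinAt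
      · intro v hv
        exact (hDθ z v (hs0.trans hv.1.le)).hasDerivWithinAt
      · refine (hk1.mono_set (fun v hv => hs.trans hv.1)).add ?_
        exact integrableOn_const (by simp)
      · intro v hv
        have h1 := hDk z hz v (hs.trans hv.1.le)
        have h2 : A v * (Φ z - Φ 0) ≤ A t * (Φ z - Φ 0) :=
          mul_le_mul_of_nonneg_right (hAmono v t (hs0.trans hv.1.le) hv.2.le)
            (by linarith [h0min z])
        linarith
    rw [intervalIntegral.integral_add (hb_int hk1 hs hst) intervalIntegrable_const,
      intervalIntegral.integral_const, smul_eq_mul] at i1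
    have i2 := intervalIntegral.integral_interval_sub_left (hb_int hk1 le_rfl ht)
      (hb_int hk1 le_rfl hs)
    have i3 : (t - s) * (A t * (Φ z - Φ 0)) ≤ y t := by
      have h1 : 0 ≤ A t * (Φ z - Φ 0) := mul_nonneg hAt.le (he0 t)
      have h2 : (t - s) * (A t * (Φ z - Φ 0)) ≤ (1 + t) * (A t * (Φ z - Φ 0)) :=
        mul_le_mul_of_nonneg_right (by linarith) h1
      have h3 : 0 ≤ A t * (1 + t) * (1 / 2 * ‖x' t‖ ^ 2) := by positivity
      simp only [hydef, hEdef]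
      linarith
    have j1 := (abs_le.1 (hinner z hz t ht)).1
    have j2 := (abs_le.1 (hinner z hz s hs)).2
    have j3 := hquad z hz t ht
    have j4 := hquad0 z s hs
    have j5 := hquad0 z t ht
    have j6 := hquad z hz s hs
    have j7 := hy0 s hs
    have e1 : ‖x t + z‖ ^ 2 = 4 * ‖x t‖ ^ 2 := by
      rw [hzdef, ← two_smul ℝ (x t), norm_smul]
      norm_num
      ring
    have e2 : ‖x s + z‖ ^ 2 + ‖x s - z‖ ^ 2 = 2 * (‖x s‖ ^ 2 + ‖z‖ ^ 2) := by
      have := parallelogram_law_with_norm ℝ (x s) z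
      linarith
    have main : c * (1 / 2 * ‖x t + z‖ ^ 2) - c * (1 / 2 * ‖x s + z‖ ^ 2) ≤
        N t - N s + Q t + Q s := by
      simp only [hθdef] at i1
      simp only [hQdef, hNdef]
      linarith
    have e3 : ‖x s - z‖ ^ 2 = 2 * (‖x s‖ ^ 2 + ‖z‖ ^ 2) - ‖x s + z‖ ^ 2 := by linarith
    rw [← mul_add, div_mul_eq_mul_div, le_div_iff₀ hc, e3]
    rw [e1] at main
    linarith
  obtain ⟨xs, hxs⟩ := hb_cauchy (L := 2 / c * (l - n)) hcau
    (by
      have := ((hl.sub hN).add hQ).const_mul (2 / c)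
      simpa using this)
    (by
      have := ((hl.neg.add hN).add hQ).const_mul (2 / c)
      refine this.congr' ?_ |>.trans ?_
      · exact Eventually.of_forall fun t => rfl
      · apply le_of_eq
        congr 1
        ring)
  refine ⟨xs, ?_, hxs⟩
  -- the limit is a minimizer
  have hΦc : Tendsto (fun t => Φ (x t)) atTop (nhds (Φ xs)) :=
    ((hΦdiff xs).hasFDerivAt.continuousAt.tendsto).comp hxs
  have hle : Φ xs ≤ Φ 0 := by
    have h1 : Tendsto (fun t => y t + Φ 0) atTop (nhds (0 + Φ 0)) := hy.add_const _
    rw [zero_add] at h1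
    refine le_of_tendsto_of_tendsto hΦc h1 ?_
    filter_upwards [eventually_ge_atTop a] with t ht
    have h1 := hA0 t (ha t ht).2
    have h2 := (ha t ht).2
    have hA1 : 1 ≤ A t := one_le_rpow (by linarith) hα0
    have h3 : 1 ≤ A t * (1 + t) := by nlinarith
    have h4 : E t ≤ A t * (1 + t) * E t := le_mul_of_one_le_left (hE0 t) h3
    have h5 : Φ (x t) - Φ 0 ≤ E t := by
      simp only [hEdef]
      have : 0 ≤ 1 / 2 * ‖x' t‖ ^ 2 := by positivity
      linarith
    simp only [hydef]
    linarith
  intro v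
  exact hle.trans (h0min v)
end

section
/- (Gronwall–Bellman lemma) Let f ∈ L¹([a,b], ℝ₊) be a nonnegative integrable function, let c ≥ 0 be a constant, and let w : [a,b] → ℝ be continuous and satisfy ½ w(t)² ≤ ½ c² + ∫_a^t f(s) w(s) ds for all t ∈ [a,b]. Then w(t) ≤ c + ∫_a^t f(s) ds for all t ∈ [a,b]. -/
open MeasureTheory Filter Real Set RealInnerProductSpace

theorem aux_sq (a t : ℝ) (f : ℝ → ℝ) (hf : IntervalIntegrable f volume a t) (k : ℝ) :
    (∫ s in a..t, f s * (k + ∫ x in a..s, f x)) = ((k + ∫ x in a..t, f x) ^ 2 - k ^ 2) / 2 := by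
  have hF : AbsolutelyContinuousOnInterval (fun s => ∫ x in a..s, f x) a t :=
    hf.absolutelyContinuousOnInterval_intervalIntegral left_mem_uIcc
  have h1 := hF.integral_deriv_mul_eq_sub hF
  have hd := hf.ae_hasDerivAt_integral
  have h2 : (∫ s in a..t, (2 * (f s * (k + ∫ x in a..s, f x)) - 2 * k * f s)) =
      ∫ s in a..t, (deriv (fun s => ∫ x in a..s, f x) s * (∫ x in a..s, f x) +
        (∫ x in a..s, f x) * deriv (fun s => ∫ x in a..s, f x) s) := by
    apply intervalIntegral.integral_congr_ae
    filter_upwards [hd] with s hs hs'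
    rw [(hs (uIoc_subset_uIcc hs') a left_mem_uIcc).deriv]
    ring
  have hi : IntervalIntegrable (fun s => f s * (k + ∫ x in a..s, f x)) volume a t := by
    apply hf.mul_continuousOn
    exact continuousOn_const.add hF.continuousOn
  rw [intervalIntegral.integral_sub (hi.const_mul 2) (hf.const_mul _),
    intervalIntegral.integral_const_mul, intervalIntegral.integral_const_mul] at h2
  rw [h1] at h2
  simp only [intervalIntegral.integral_same] at h2
  linarith

theorem gronwall_bellman
    (a b : ℝ) (hab : a < b)
    (f : ℝ → ℝ) (hf0 : ∀ t ∈ Icc a b, 0 ≤ f t)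
    (hfint : IntegrableOn f (Icc a b))
    (c : ℝ) (hc : 0 ≤ c)
    (w : ℝ → ℝ) (hw : ContinuousOn w (Icc a b))
    (hineq : ∀ t ∈ Icc a b,
      w t ^ 2 / 2 ≤ c ^ 2 / 2 + ∫ s in a..t, f s * w s) :
    ∀ t ∈ Icc a b, w t ≤ c + ∫ s in a..t, f s := by
  intro t ht
  refine le_of_forall_pos_le_add fun ε hε => ?_
  by_contra! hcon
  have hfi : ∀ r ∈ Icc a b, IntervalIntegrable f volume a r := fun r hr => by
    rw [intervalIntegrable_iff_integrableOn_Icc_of_le hr.1]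
    exact hfint.mono_set (Icc_subset_Icc_right hr.2)
  have hu : ContinuousOn (fun r => c + ε + ∫ s in a..r, f s) (Icc a b) := by
    apply continuousOn_const.add
    exact intervalIntegral.continuousOn_primitive_interval (by rwa [uIcc_of_le hab.le]) |>.mono
      (by rw [uIcc_of_le hab.le])
  set S := {r | r ∈ Icc a b ∧ (c + ε + ∫ s in a..r, f s) ≤ w r} with hS
  have hScl : IsClosed S := isClosed_Icc.isClosed_le hu hw
  have hSne : S.Nonempty := ⟨t, ht, by linarith⟩
  have hSbd : BddBelow S := ⟨a, fun r hr => hr.1.1⟩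
  obtain ⟨hr, hrw⟩ : sInf S ∈ S := hScl.csInf_mem hSne hSbd
  set r := sInf S with hrdef
  have hlt : ∀ s ∈ Ico a r, w s < c + ε + ∫ x in a..s, f x := by
    intro s hs
    by_contra! h
    exact absurd (csInf_le hSbd (show s ∈ S from ⟨⟨hs.1, hs.2.le.trans hr.2⟩, h⟩)) (not_le.2 hs.2)
  have hsub : uIcc a r ⊆ Icc a b := by
    rw [uIcc_of_le hr.1]; exact Icc_subset_Icc_right hr.2
  have hmono : (∫ s in a..r, f s * w s) ≤ ∫ s in a..r, f s * (c + ε + ∫ x in a..s, f x) := by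
    apply intervalIntegral.integral_mono_on_of_le_Ioo hr.1
      ((hfi r hr).mul_continuousOn (hw.mono hsub)) ((hfi r hr).mul_continuousOn (hu.mono hsub))
    intro s hs
    exact mul_le_mul_of_nonneg_left (hlt s ⟨hs.1.le, hs.2⟩).le
      (hf0 s ⟨hs.1.le, hs.2.le.trans hr.2⟩)
  rw [aux_sq a r f (hfi r hr)] at hmono
  have h0 : 0 ≤ ∫ x in a..r, f x :=
    intervalIntegral.integral_nonneg hr.1 fun s hs => hf0 s ⟨hs.1, hs.2.trans hr.2⟩
  have h3 := hineq r hr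
  have h4 : (c + ε + ∫ s in a..r, f s) ^ 2 ≤ w r ^ 2 := by gcongr
  nlinarith [mul_nonneg hc hε.le, mul_pos hε hε]
end

section
/- Let ω : [0,∞) → H be measurable with ∫₀^∞ (1/γ(t)) ‖ω(t)‖ dt < ∞. If y ∈ W²,¹_loc(0,∞;H) solves the differential equation y''(t) + γ(t) y'(t) = ω(t) for t ≥ 0, then y(t) converges strongly in H (i.e. in norm) as t → +∞. -/
open MeasureTheory Filter Real Set RealInnerProductSpace

theorem linear_ode_strong_convergence
    {H : Type*} [NormedAddCommGroup H] [InnerProductSpace ℝ H] [CompleteSpace H]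
    (c α : ℝ) (hc : 0 < c) (hα0 : 0 ≤ α) (hα1 : α < 1)
    (ω : ℝ → H) (hωmeas : AEStronglyMeasurable ω (volume.restrict (Ici (0:ℝ))))
    (hωint : IntegrableOn (fun t => (c / (1 + t) ^ α)⁻¹ * ‖ω t‖) (Ici (0:ℝ)))
    (y y' y'' : ℝ → H)
    (hy1 : ∀ t ∈ Ici (0:ℝ), HasDerivAt y (y' t) t)
    (hy2 : ∀ t ∈ Ici (0:ℝ), HasDerivAt y' (y'' t) t)
    (hode : ∀ t ∈ Ici (0:ℝ), y'' t + (c / (1 + t) ^ α) • y' t = ω t) :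
    ∃ l : H, Tendsto y atTop (nhds l) := by
  obtain ⟨T, hT0, hT⟩ : ∃ T : ℝ, 0 ≤ T ∧ ∀ t ≥ T, 2 / c * (α * (1 + t) ^ (α - 1)) ≤ 1 := by
    have h1 : Tendsto (fun t : ℝ => (1 + t) ^ (-(1 - α))) atTop (nhds 0) :=
      (tendsto_rpow_neg_atTop (by linarith)).comp (tendsto_atTop_add_const_left _ 1 tendsto_id)
    have h2 : Tendsto (fun t : ℝ => 2 / c * (α * (1 + t) ^ (α - 1))) atTop (nhds 0) := by
      have := (h1.const_mul α).const_mul (2 / c)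
      simpa using this
    obtain ⟨T, hT⟩ := eventually_atTop.1 (h2.eventually (ge_mem_nhds (zero_lt_one)))
    exact ⟨max T 0, le_max_right _ _, fun t ht => hT t ((le_max_left _ _).trans ht)⟩
  have hcont : ContinuousOn y' (Ici 0) := fun t ht => (hy2 t ht).continuousAt.continuousWithinAt
  set I : ℝ := ∫ t in Ici (0:ℝ), (c / (1 + t) ^ α)⁻¹ * ‖ω t‖ with hI
  have key : ∀ S, T ≤ S → ∫ t in T..S, ‖y' t‖ ≤
      2 * I + 2 + 2 / c * (1 + T) ^ α * (‖y' T‖ + 1) := by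
    intro S hTS
    have hS0 : 0 ≤ S := hT0.trans hTS
    set δ : ℝ := 1 / (1 + S) with hδ
    have hδ0 : 0 < δ := by positivity
    have hδ1 : δ ≤ 1 := by rw [hδ, div_le_one (by positivity)]; linarith
    have hδS : δ * (S - T) ≤ 1 := by
      rw [hδ, one_div, inv_mul_le_one₀ (by positivity)]; linarith
    let s : ℝ → ℝ := fun t => √(‖y' t‖ ^ 2 + δ ^ 2)
    have hspos : ∀ t, 0 < s t := fun t => Real.sqrt_pos.2 (by positivity)
    have hsq : ∀ t, s t ^ 2 = ‖y' t‖ ^ 2 + δ ^ 2 := fun t => Real.sq_sqrt (by positivity)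
    have hsy : ∀ t, ‖y' t‖ ≤ s t := fun t => Real.le_sqrt_of_sq_le (by nlinarith)
    have hsδ : ∀ t, δ ≤ s t := fun t => Real.le_sqrt_of_sq_le (by nlinarith [sq_nonneg ‖y' t‖])
    have hsT : s T ≤ ‖y' T‖ + 1 := by
      refine Real.sqrt_le_iff.2 ⟨by positivity, ?_⟩
      nlinarith [norm_nonneg (y' T)]
    have hsub : Icc T S ⊆ Ici (0:ℝ) := fun t ht => hT0.trans ht.1
    have hcontS : ContinuousOn y' (Icc T S) := hcont.mono hsub
    have hderiv : ∀ t ∈ Ici (0:ℝ), HasDerivAt (fun t => 2 / c * (1 + t) ^ α * s t)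
        (2 / c * (α * (1 + t) ^ (α - 1)) * s t
          + 2 / c * (1 + t) ^ α * ((inner ℝ (y' t) (y'' t)) / s t)) t := by
      intro t ht
      have ht0 : (0:ℝ) ≤ t := ht
      have h1 : HasDerivAt (fun t : ℝ => (1 + t) ^ α) (α * (1 + t) ^ (α - 1)) t := by
        have := ((hasDerivAt_id t).const_add 1).rpow_const (p := α) (Or.inl (by simp; linarith))
        simpa using this
      have h2 : HasDerivAt s ((inner ℝ (y' t) (y'' t)) / s t) t := by
        have := (((hy2 t ht).norm_sq).add_const (δ ^ 2)).sqrt (by positivity)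
        convert this using 1
        exact (mul_div_mul_left _ _ two_ne_zero).symm
      exact (h1.const_mul (2 / c)).mul h2
    have hscont : ContinuousOn s (Icc T S) :=
      ((hcontS.norm.pow 2).add continuousOn_const).sqrt
    have hωS : IntegrableOn (fun t => (c / (1 + t) ^ α)⁻¹ * ‖ω t‖) (Icc T S) :=
      hωint.mono_set hsub
    have hsint : IntegrableOn s (Icc T S) := hscont.integrableOn_Icc
    have hmain := intervalIntegral.sub_le_integral_of_hasDeriv_right_of_le
      (g := fun t => 2 / c * (1 + t) ^ α * s t)
      (φ := fun t => 2 * ((c / (1 + t) ^ α)⁻¹ * ‖ω t‖) + 2 * δ - s t) hTS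
      (fun t ht => (hderiv t (hsub ht)).continuousAt.continuousWithinAt)
      (fun t ht => (hderiv t (hsub (Ioo_subset_Icc_self ht))).hasDerivWithinAt)
      (((hωS.const_mul 2).add (integrableOn_const (by simp))).sub hsint)
      (by
        intro t ht
        have ht0 : (0:ℝ) ≤ t := hsub (Ioo_subset_Icc_self ht)
        have hw : 0 < (1 + t) ^ α := by positivity
        have hp := hT t ht.1.le
        have hy'' : y'' t = ω t - (c / (1 + t) ^ α) • y' t := by rw [← hode t ht0]; abel
        have hin : (inner ℝ (y' t) (y'' t)) = (inner ℝ (y' t) (ω t)) - c / (1 + t) ^ α * ‖y' t‖ ^ 2 := by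
          rw [hy'', inner_sub_right, inner_smul_right, real_inner_self_eq_norm_sq]
        have hin2 : (inner ℝ (y' t) (ω t)) ≤ s t * ‖ω t‖ :=
          (real_inner_le_norm _ _).trans (by gcongr; exact hsy t)
        have hb : (inner ℝ (y' t) (y'' t)) / s t ≤ ‖ω t‖ - c / (1 + t) ^ α * (s t - δ) := by
          rw [div_le_iff₀ (hspos t), hin]
          have hg : 0 < c / (1 + t) ^ α := by positivity
          have : (s t - δ) * s t ≤ ‖y' t‖ ^ 2 := by nlinarith [hsq t, hsδ t]
          nlinarith [mul_le_mul_of_nonneg_left this hg.le]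
        have h3 := mul_le_mul_of_nonneg_left hb (show 0 ≤ 2 / c * (1 + t) ^ α by positivity)
        have h4 : 2 / c * (1 + t) ^ α * (‖ω t‖ - c / (1 + t) ^ α * (s t - δ))
            = 2 * ((c / (1 + t) ^ α)⁻¹ * ‖ω t‖) - 2 * (s t - δ) := by
          field_simp
        have h5 := mul_le_mul_of_nonneg_right hp (hspos t).le
        linarith)
    have hii1 : IntervalIntegrable (fun t => (c / (1 + t) ^ α)⁻¹ * ‖ω t‖) volume T S :=
      (intervalIntegrable_iff_integrableOn_Icc_of_le hTS).2 hωS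
    have hii2 : IntervalIntegrable s volume T S :=
      (intervalIntegrable_iff_integrableOn_Icc_of_le hTS).2 hsint
    rw [intervalIntegral.integral_sub ((hii1.const_mul 2).add intervalIntegrable_const) hii2,
      intervalIntegral.integral_add (hii1.const_mul 2) intervalIntegrable_const,
      intervalIntegral.integral_const_mul, intervalIntegral.integral_const] at hmain
    have hle1 : ∫ t in T..S, ‖y' t‖ ≤ ∫ t in T..S, s t :=
      intervalIntegral.integral_mono_on hTS
        ((intervalIntegrable_iff_integrableOn_Icc_of_le hTS).2 hcontS.norm.integrableOn_Icc)
        hii2 (fun t _ => hsy t)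
    have hle2 : ∫ t in T..S, (c / (1 + t) ^ α)⁻¹ * ‖ω t‖ ≤ I := by
      rw [intervalIntegral.integral_of_le hTS]
      refine setIntegral_mono_set hωint ?_ (Ioc_subset_Icc_self.trans hsub).eventuallyLE
      filter_upwards [ae_restrict_mem measurableSet_Ici] with t ht
      have : (0:ℝ) ≤ t := ht
      simp only [Pi.zero_apply]
      positivity
    have hgS : 0 ≤ 2 / c * (1 + S) ^ α * s S := by have := hspos S; positivity
    have hgT : 2 / c * (1 + T) ^ α * s T ≤ 2 / c * (1 + T) ^ α * (‖y' T‖ + 1) := by gcongr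
    simp only [smul_eq_mul] at hmain
    linarith
  have hint : IntegrableOn y' (Ioi T) := by
    refine integrableOn_Ioi_of_intervalIntegral_norm_bounded (b := id) _ T ?_ tendsto_id
      ((eventually_ge_atTop T).mono key)
    intro S
    exact ((hcont.mono (fun t ht => hT0.trans ht.1)).integrableOn_Icc).mono_set Ioc_subset_Icc_self
  exact ⟨_, tendsto_limUnder_of_hasDerivAt_of_integrableOn_Ioi
    (fun t ht => hy1 t (hT0.trans (le_of_lt ht))) hint⟩
end

section
/- Let ω : [0,∞) → H be measurable with ∫₀^∞ (1/γ(t)) ‖ω(t)‖ dt < ∞, and let y ∈ W²,¹_loc(0,∞;H) solve y''(t) + γ(t) y'(t) = ω(t) for t ≥ 0. Then the derivative y' is Bochner integrable on [0,∞): ∫₀^∞ ‖y'(t)‖ dt < ∞. -/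
open MeasureTheory Filter Real Set RealInnerProductSpace

theorem aux_alg (g g' ip w n r e γ i : ℝ) (hg : 0 ≤ g) (hgγ : g * γ = 1) (hg' : g' ≤ 1/2)
    (hn : 0 ≤ n) (hr : 0 < r) (he : 0 < e) (hr2 : r^2 = n^2 + e^2) (hw : 0 ≤ w)
    (hip : ip ≤ n * w) (hi : i = ip - γ * n^2) :
    g' * r + g * (i / r) ≤ g * w + e - r / 2 := by
  have hnr : n ≤ r := by nlinarith
  have her : e ≤ r := by nlinarith
  have h1 : g * i ≤ (g * w + e - r) * r := by
    have h2 : g * i = g * ip - n^2 := by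
      rw [hi]; linear_combination (-n^2) * hgγ
    have h3 : g * ip ≤ g * (n * w) := mul_le_mul_of_nonneg_left hip hg
    have h4 : g * (n * w) ≤ g * (r * w) := by gcongr
    have h5 : e * e ≤ e * r := by gcongr
    nlinarith
  have h6 : g * (i / r) ≤ g * w + e - r := by
    rw [← mul_div_assoc, div_le_iff₀ hr]; exact h1
  nlinarith

theorem linear_ode_velocity_integrable
    {H : Type*} [NormedAddCommGroup H] [InnerProductSpace ℝ H] [CompleteSpace H]
    (c α : ℝ) (hc : 0 < c) (hα0 : 0 ≤ α) (hα1 : α < 1)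
    (ω : ℝ → H) (hωmeas : AEStronglyMeasurable ω (volume.restrict (Ici (0:ℝ))))
    (hωint : IntegrableOn (fun t => (c / (1 + t) ^ α)⁻¹ * ‖ω t‖) (Ici (0:ℝ)))
    (y y' y'' : ℝ → H)
    (hy1 : ∀ t ∈ Ici (0:ℝ), HasDerivAt y (y' t) t)
    (hy2 : ∀ t ∈ Ici (0:ℝ), HasDerivAt y' (y'' t) t)
    (hode : ∀ t ∈ Ici (0:ℝ), y'' t + (c / (1 + t) ^ α) • y' t = ω t) :
    IntegrableOn (fun t => ‖y' t‖) (Ici (0:ℝ)) := by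
  have hcont : ContinuousOn (fun t => ‖y' t‖) (Ici (0:ℝ)) := fun t ht =>
    (hy2 t ht).continuousAt.norm.continuousWithinAt
  set g : ℝ → ℝ := fun t => (c / (1 + t) ^ α)⁻¹ with hgdef
  have hgpos : ∀ t, 0 ≤ t → 0 < g t := fun t ht => by
    have : (0:ℝ) < 1 + t := by linarith
    simp only [hgdef]; positivity
  set G : ℝ → ℝ := fun t => α * (1 + t) ^ (α - 1) / c with hGdef
  have hgder : ∀ t, 0 ≤ t → HasDerivAt g (G t) t := fun t ht => by
    have h0 : (1 + t) ≠ 0 := by linarith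
    have h1 : HasDerivAt (fun s : ℝ => 1 + s) 1 t := (hasDerivAt_id t).const_add 1
    have h2 := (h1.rpow_const (p := α) (Or.inl h0)).div_const c
    have h3 : g = fun s => (1 + s) ^ α / c := by
      funext s; simp only [hgdef, inv_div]
    rw [h3]
    exact h2.congr_deriv (by simp only [hGdef]; ring)
  obtain ⟨T, hT0, hT⟩ : ∃ T, 0 ≤ T ∧ ∀ t, T ≤ t → G t ≤ 1/2 := by
    have h1 : Tendsto (fun t : ℝ => 1 + t) atTop atTop := tendsto_atTop_add_const_left _ _ tendsto_id
    have h2 := (tendsto_rpow_neg_atTop (y := 1 - α) (by linarith)).comp h1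
    have h3 : Tendsto G atTop (nhds 0) := by
      have := (h2.const_mul α).div_const c
      simp only [mul_zero, zero_div, Function.comp_def, neg_sub] at this
      exact this
    have h4 : ∀ᶠ t in atTop, G t ≤ 1/2 := h3.eventually_le_const (by norm_num)
    obtain ⟨T, hT⟩ := eventually_atTop.1 h4
    exact ⟨max T 0, le_max_right _ _, fun t ht => hT t ((le_max_left _ _).trans ht)⟩
  have hIcc : IntegrableOn (fun t => ‖y' t‖) (Icc 0 T) :=
    (hcont.mono Icc_subset_Ici_self).integrableOn_Icc
  suffices hIoi : IntegrableOn (fun t => ‖y' t‖) (Ioi T) by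
    rw [← Icc_union_Ioi_eq_Ici hT0]; exact hIcc.union hIoi
  set C := ∫ t in Ici (0:ℝ), g t * ‖ω t‖ with hC
  refine integrableOn_Ioi_of_intervalIntegral_norm_bounded
    (2 * (g T * (‖y' T‖ + 1) + C + 1)) T (b := fun t : ℝ => t) (l := atTop) ?_ tendsto_id ?_
  · intro b
    exact ((hcont.mono Icc_subset_Ici_self).mono
      (Icc_subset_Icc_left hT0)).integrableOn_Icc.mono_set Ioc_subset_Icc_self
  filter_upwards [eventually_ge_atTop T] with b hb
  set e : ℝ := 1 / (1 + (b - T)) with he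
  have hbT : 0 < 1 + (b - T) := by linarith
  have hepos : 0 < e := by positivity
  have he1 : e ≤ 1 := by rw [he, div_le_one hbT]; linarith
  have heb : e * (b - T) ≤ 1 := by
    rw [he, div_mul_eq_mul_div, div_le_one hbT]; linarith
  clear_value e
  set r : ℝ → ℝ := fun t => √(‖y' t‖^2 + e^2) with hr
  have hrpos : ∀ t, 0 < r t := fun t => by simp only [hr]; positivity
  have hr2 : ∀ t, r t ^ 2 = ‖y' t‖^2 + e^2 := fun t => by
    simp only [hr]; exact Real.sq_sqrt (by positivity)
  have hnr : ∀ t, ‖y' t‖ ≤ r t := fun t => by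
    have := hr2 t; have := hrpos t; have := norm_nonneg (y' t); nlinarith
  have hrT : r T ≤ ‖y' T‖ + 1 := by
    have := hr2 T; have := hrpos T; have := norm_nonneg (y' T); nlinarith
  have hrder : ∀ t, 0 ≤ t → HasDerivAt r (inner ℝ (y' t) (y'' t) / r t) t := fun t ht => by
    have h1 := ((hy2 t ht).norm_sq.add_const (e^2)).sqrt (by positivity)
    convert h1 using 1
    simp only [hr]
    have := (hrpos t).ne'
    simp only [hr] at this
    field_simp
  have hrcont : ContinuousOn r (Icc T b) := fun t ht =>
    (hrder t (hT0.trans ht.1)).continuousAt.continuousWithinAt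
  have hsub : Icc T b ⊆ Ici 0 := fun t ht => hT0.trans ht.1
  have hωI : IntegrableOn (fun t => g t * ‖ω t‖) (Icc T b) := hωint.mono_set hsub
  have hrI : IntegrableOn r (Icc T b) := hrcont.integrableOn_Icc
  have hcI : IntegrableOn (fun _ : ℝ => e) (Icc T b) := continuousOn_const.integrableOn_Icc
  have key : g b * r b - g T * r T ≤ ∫ t in T..b, (g t * ‖ω t‖ + e - r t / 2) := by
    refine intervalIntegral.sub_le_integral_of_hasDeriv_right_of_le
      (g := fun t => g t * r t) (g' := fun t => G t * r t + g t * (inner ℝ (y' t) (y'' t) / r t)) hb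
      ?_ ?_ ((hωI.add hcI).sub (hrI.div_const 2)) ?_
    · intro t ht
      have h0 : 0 ≤ t := hsub ht
      exact ((hgder t h0).mul (hrder t h0)).continuousAt.continuousWithinAt
    · intro t ht
      have h0 : 0 ≤ t := hsub (Ioo_subset_Icc_self ht)
      exact ((hgder t h0).mul (hrder t h0)).hasDerivWithinAt
    · intro t ht
      have h0 : 0 ≤ t := hsub (Ioo_subset_Icc_self ht)
      have h1 : (0:ℝ) < 1 + t := by linarith
      refine aux_alg (g t) (G t) (inner ℝ (y' t) (ω t)) ‖ω t‖ ‖y' t‖ (r t) e (c / (1 + t)^α) _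
        (hgpos t h0).le ?_ (hT t ht.1.le) (norm_nonneg _) (hrpos t) hepos (hr2 t) (norm_nonneg _)
        (real_inner_le_norm _ _) ?_
      · exact inv_mul_cancel₀ (by positivity)
      · rw [← hode t h0, inner_add_right, inner_smul_right, real_inner_self_eq_norm_sq]; ring
  have i1 := (intervalIntegrable_iff_integrableOn_Icc_of_le hb).2 hωI
  have i2 := (intervalIntegrable_iff_integrableOn_Icc_of_le hb).2 hcI
  have i3 := (intervalIntegrable_iff_integrableOn_Icc_of_le hb).2 hrI
  rw [intervalIntegral.integral_sub (i1.add i2) (i3.div_const 2),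
    intervalIntegral.integral_add i1 i2, intervalIntegral.integral_div,
    intervalIntegral.integral_const, smul_eq_mul] at key
  have hle : ∫ t in T..b, g t * ‖ω t‖ ≤ C := by
    rw [intervalIntegral.integral_of_le hb, hC]
    refine setIntegral_mono_set hωint ?_ (Ioc_subset_Icc_self.trans hsub).eventuallyLE
    filter_upwards [ae_restrict_mem measurableSet_Ici] with t ht
    exact mul_nonneg (hgpos t ht).le (norm_nonneg _)
  have hfin : ∫ t in T..b, ‖‖y' t‖‖ ≤ ∫ t in T..b, r t := by
    simp only [norm_norm]
    refine intervalIntegral.integral_mono_on hb ?_ i3 (fun t _ => hnr t)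
    exact (intervalIntegrable_iff_integrableOn_Icc_of_le hb).2 (hcont.mono hsub).integrableOn_Icc
  have p1 := mul_le_mul_of_nonneg_left hrT (hgpos T hT0).le
  have p2 := mul_pos (hgpos b (hT0.trans hb)) (hrpos b)
  linarith
end

section
/- Let x be a solution of the heavy ball equation with vanishing damping and source term g satisfying ∫₀^∞ (1+t)^α ‖g(t)‖ dt < ∞. Then the trajectory is bounded: sup_{t≥0} ‖x(t)‖ < ∞. Moreover, for every x* ∈ argmin Φ, sup_{t≥0} ‖x(t) − x* + h(t) x'(t)‖ < ∞, where h(t) = e^{Γ(t)} ∫_t^∞ e^{−Γ(s)} ds and Γ(t) = ∫₀^t γ(s) ds. -/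
open MeasureTheory Filter Real Set RealInnerProductSpace

theorem hb_convex_ineq {H : Type*} [NormedAddCommGroup H] [InnerProductSpace ℝ H]
    [CompleteSpace H] (Φ : H → ℝ) (Φ' : H → H)
    (hΦconv : ConvexOn ℝ Set.univ Φ)
    (hΦdiff : ∀ u : H, HasGradientAt Φ (Φ' u) u) (a b : H) :
    Φ a - Φ b ≤ ⟪a - b, Φ' a⟫ := by
  have hline : ∀ s : ℝ, HasDerivAt (fun s : ℝ => a + s • (b - a)) (b - a) s := by
    intro s
    simpa using ((hasDerivAt_id s).smul_const (b - a)).const_add a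
  have hd : HasDerivAt (fun s : ℝ => Φ (a + s • (b - a))) ⟪Φ' a, b - a⟫ 0 := by
    have h1 := (hΦdiff (a + (0:ℝ) • (b - a))).hasFDerivAt
    have h2 := h1.comp_hasDerivAt (0:ℝ) (hline 0)
    exact h2.congr_deriv (by simp)
  have hconv : ConvexOn ℝ Set.univ (fun s : ℝ => Φ (a + s • (b - a))) := by
    have := hΦconv.comp_affineMap (AffineMap.lineMap a b : ℝ →ᵃ[ℝ] H)
    rw [preimage_univ] at this
    have e : (fun s : ℝ => Φ (a + s • (b - a))) = Φ ∘ (AffineMap.lineMap a b : ℝ →ᵃ[ℝ] H) := by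
      funext s
      simp [AffineMap.lineMap_apply, add_comm]
    rw [e]
    exact this
  have := hconv.le_slope_of_hasDerivAt (mem_univ 0) (mem_univ 1) one_pos hd
  simp only [slope_def_field, one_smul, zero_smul, add_zero, sub_zero, div_one,
    add_sub_cancel] at this
  rw [real_inner_comm, ← neg_sub b a, inner_neg_right]
  linarith

theorem hb_u_bounded {H : Type*} [NormedAddCommGroup H] [InnerProductSpace ℝ H]
    [CompleteSpace H] (Φ : H → ℝ) (Φ' : H → H)
    (hΦconv : ConvexOn ℝ Set.univ Φ)
    (hΦdiff : ∀ u : H, HasGradientAt Φ (Φ' u) u)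
    (γ h : ℝ → ℝ) (g x x' x'' : ℝ → H) (m : ℝ → ℝ) (T : ℝ) (hT : 0 ≤ T)
    (hx1 : ∀ t, 0 ≤ t → HasDerivAt x (x' t) t)
    (hx2 : ∀ t, 0 ≤ t → HasDerivAt x' (x'' t) t)
    (hode : ∀ t, 0 ≤ t → x'' t + γ t • x' t + Φ' (x t) = g t)
    (hh : ∀ t, 0 ≤ t → HasDerivAt h (γ t * h t - 1) t)
    (hpos : ∀ t, 0 ≤ t → 0 < h t)
    (hhT : ∀ t, T ≤ t → γ t * h t ≤ 3 / 2)
    (hm : IntegrableOn m (Ici (0:ℝ))) (hm0 : ∀ t, 0 ≤ t → 0 ≤ m t)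
    (hmg : ∀ t, T ≤ t → h t * ‖g t‖ ≤ m t)
    (p : H) (hp : ∀ v, Φ p ≤ Φ v) :
    ∃ M : ℝ, ∀ t ≥ (0:ℝ), ‖x t - p + h t • x' t‖ ≤ M := by
  set u : ℝ → H := fun t => x t - p + h t • x' t with hu
  have hud : ∀ t, 0 ≤ t → HasDerivAt u (h t • (g t - Φ' (x t))) t := by
    intro t ht
    have h1 := ((hx1 t ht).sub_const p).add ((hh t ht).smul (hx2 t ht))
    refine h1.congr_deriv ?_
    rw [← hode t ht]
    module
  have hucont : ContinuousOn u (Ici 0) := fun t ht =>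
    (hud t ht).continuousAt.continuousWithinAt
  set V : ℝ → ℝ := fun t => h t ^ 2 * (Φ (x t) - Φ p) + 1 / 2 * ⟪u t, u t⟫ with hV
  set V' : ℝ → ℝ := fun t => (2 * h t * (γ t * h t - 1)) * (Φ (x t) - Φ p)
    + h t ^ 2 * ⟪Φ' (x t), x' t⟫ + ⟪u t, h t • (g t - Φ' (x t))⟫ with hV'
  have hVd : ∀ t, 0 ≤ t → HasDerivAt V (V' t) t := by
    intro t ht
    have h1 : HasDerivAt (fun t => Φ (x t) - Φ p) ⟪Φ' (x t), x' t⟫ t := by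
      have := ((hΦdiff (x t)).hasFDerivAt.comp_hasDerivAt t (hx1 t ht)).sub_const (Φ p)
      simpa using this
    have h2 := (((hh t ht).pow 2).mul h1).add
      (((hud t ht).inner ℝ (hud t ht)).const_mul (1 / 2))
    refine h2.congr_deriv ?_
    simp only [hV']
    rw [real_inner_comm (u t) (h t • (g t - Φ' (x t)))]
    simp
    ring
  have hVu : ∀ t, 1 / 2 * ‖u t‖ ^ 2 ≤ V t := by
    intro t
    simp only [hV, real_inner_self_eq_norm_sq]
    have := mul_nonneg (sq_nonneg (h t)) (sub_nonneg.2 (hp (x t)))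
    linarith
  have hV0 : ∀ t, 0 ≤ V t := fun t => le_trans (by positivity) (hVu t)
  have hV'le : ∀ t, T ≤ t → V' t ≤ m t * ‖u t‖ := by
    intro t ht
    have ht0 := hT.trans ht
    have hc := hb_convex_ineq Φ Φ' hΦconv hΦdiff (x t) p
    have e1 : V' t = h t * ((2 * (γ t * h t - 1)) * (Φ (x t) - Φ p)
        - ⟪x t - p, Φ' (x t)⟫) + h t * ⟪u t, g t⟫ := by
      simp only [hV', hu, inner_smul_right, inner_sub_right, inner_add_left, inner_smul_left]
      rw [real_inner_comm (x' t) (Φ' (x t))]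
      simp
      ring
    rw [e1]
    have h3 : (2 * (γ t * h t - 1)) * (Φ (x t) - Φ p) - ⟪x t - p, Φ' (x t)⟫ ≤ 0 := by
      have := mul_nonneg (sub_nonneg.2 (hhT t ht)) (sub_nonneg.2 (hp (x t)))
      nlinarith
    have h4 := mul_nonpos_of_nonneg_of_nonpos (hpos t ht0).le h3
    have h5 : h t * ⟪u t, g t⟫ ≤ h t * (‖u t‖ * ‖g t‖) :=
      mul_le_mul_of_nonneg_left (real_inner_le_norm _ _) (hpos t ht0).le
    have h6 := mul_le_mul_of_nonneg_right (hmg t ht) (norm_nonneg (u t))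
    nlinarith
  have hlog : ∀ t, T ≤ t → Real.log (1 + V t) ≤ Real.log (1 + V T) + ∫ s in Ici (0:ℝ), m s := by
    intro t ht
    have hld : ∀ s, 0 ≤ s → HasDerivAt (fun s => Real.log (1 + V s)) (V' s / (1 + V s)) s := by
      intro s hs
      exact ((hVd s hs).const_add 1).log (by have := hV0 s; positivity)
    have key := intervalIntegral.sub_le_integral_of_hasDeriv_right_of_le
      (g := fun s => Real.log (1 + V s)) (g' := fun s => V' s / (1 + V s)) (φ := m) ht
      (fun s hs => (hld s (hT.trans hs.1)).continuousAt.continuousWithinAt)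
      (fun s hs => (hld s (hT.trans hs.1.le)).hasDerivWithinAt)
      (hm.mono_set (fun s hs => hT.trans hs.1))
      (by
        intro s hs
        have h1 := hV0 s
        rw [div_le_iff₀ (by positivity)]
        refine (hV'le s hs.1.le).trans ?_
        refine mul_le_mul_of_nonneg_left ?_ (hm0 s (hT.trans hs.1.le))
        nlinarith [hVu s, sq_nonneg (‖u s‖ - 1)])
    have h2 : ∫ s in T..t, m s ≤ ∫ s in Ici (0:ℝ), m s := by
      rw [intervalIntegral.integral_of_le ht]
      refine setIntegral_mono_set hm ?_ ?_
      · filter_upwards [self_mem_ae_restrict measurableSet_Ici] with s hs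
        exact hm0 s hs
      · exact (show Ioc T t ⊆ Ici 0 from fun s hs => hT.trans hs.1.le).eventuallyLE
    linarith
  set C := Real.exp (Real.log (1 + V T) + ∫ s in Ici (0:ℝ), m s) with hC
  obtain ⟨M, hM⟩ := (isCompact_Icc (a := (0:ℝ)) (b := T)).exists_bound_of_continuousOn
    (hucont.mono (fun s hs => hs.1))
  refine ⟨max M C, fun t ht => ?_⟩
  rcases le_total t T with h1 | h1
  · exact (hM t ⟨ht, h1⟩).trans (le_max_left _ _)
  · refine le_trans ?_ (le_max_right _ _)
    have h2 := hV0 t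
    have h3 : 1 + V t ≤ C := by
      rw [hC, ← Real.log_le_iff_le_exp (by positivity)]
      exact hlog t h1
    change ‖u t‖ ≤ C
    nlinarith [hVu t, sq_nonneg (‖u t‖ - 1)]

theorem hb_y_bounded {H : Type*} [NormedAddCommGroup H] [InnerProductSpace ℝ H]
    (G P : ℝ → ℝ) (y y' : ℝ → H) (M : ℝ)
    (hy : ∀ t, 0 ≤ t → HasDerivAt y (y' t) t)
    (hP : ∀ t, 0 ≤ t → HasDerivAt P (-Real.exp (-G t)) t)
    (hpos : ∀ t, 0 ≤ t → 0 < P t)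
    (hM : ∀ t, 0 ≤ t → ‖y t + (Real.exp (G t) * P t) • y' t‖ ≤ M) :
    ∀ t, 0 ≤ t → ‖y t‖ ≤ ‖y 0‖ + M := by
  intro t ht
  have hq : ∀ s, 0 ≤ s → HasDerivAt (fun s => (P s)⁻¹) (Real.exp (-G s) / P s ^ 2) s := by
    intro s hs
    exact ((hP s hs).inv (hpos s hs).ne').congr_deriv (by simp)
  have hf : ∀ s, 0 ≤ s → HasDerivAt (fun s => (P s)⁻¹ • y s)
      ((Real.exp (-G s) / P s ^ 2) • (y s + (Real.exp (G s) * P s) • y' s)) s := by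
    intro s hs
    refine ((hq s hs).smul (hy s hs)).congr_deriv ?_
    have : Real.exp (-G s) / P s ^ 2 * (Real.exp (G s) * P s) = (P s)⁻¹ := by
      have := (hpos s hs).ne'
      rw [Real.exp_neg]
      field_simp
    rw [smul_add, smul_smul, this, add_comm]
  have hB : ∀ s, 0 ≤ s → HasDerivAt (fun s => (‖y 0‖ + M) * (P s)⁻¹)
      ((‖y 0‖ + M) * (Real.exp (-G s) / P s ^ 2)) s := fun s hs => (hq s hs).const_mul _
  have hM0 : 0 ≤ M := (norm_nonneg _).trans (hM 0 le_rfl)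
  have key := image_norm_le_of_norm_deriv_right_le_deriv_boundary' (a := 0) (b := t)
    (fun s hs => (hf s hs.1).continuousAt.continuousWithinAt)
    (fun s hs => (hf s hs.1).hasDerivWithinAt) (B := fun s => (‖y 0‖ + M) * (P s)⁻¹)
    (by
      have := inv_pos.2 (hpos 0 le_rfl)
      rw [norm_smul, Real.norm_of_nonneg this.le]
      nlinarith)
    (fun s hs => (hB s hs.1).continuousAt.continuousWithinAt)
    (fun s hs => (hB s hs.1).hasDerivWithinAt)
    (by
      intro s hs
      rw [norm_smul, Real.norm_of_nonneg (by positivity), mul_comm]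
      refine mul_le_mul_of_nonneg_right ?_ (by positivity)
      linarith [hM s hs.1, norm_nonneg (y 0)])
    (right_mem_Icc.2 ht)
  have := inv_pos.2 (hpos t ht)
  rw [norm_smul, Real.norm_of_nonneg this.le, mul_comm] at key
  exact le_of_mul_le_mul_right key this

theorem hb_damping (c α : ℝ) (hc : 0 < c) (hα1 : α < 1) (G : ℝ → ℝ)
    (hG : G = fun t => ∫ s in (0:ℝ)..t, c / (1 + s) ^ α) :
    (∀ t, 0 ≤ t → HasDerivAt G (c / (1 + t) ^ α) t) ∧
    ∃ P : ℝ → ℝ, (∀ t, 0 ≤ t → P t = ∫ s in Ioi t, Real.exp (-G s)) ∧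
      (∀ t, 0 ≤ t → HasDerivAt P (-Real.exp (-G t)) t) ∧
      (∀ t, 0 ≤ t → 0 < P t) ∧
      ∃ T, 0 ≤ T ∧ ∀ t, T ≤ t → c / (1 + t) ^ α * (Real.exp (G t) * P t) ≤ 3 / 2 := by
  have hcont : ContinuousOn (fun s : ℝ => c / (1 + s) ^ α) (Ioi (-1)) := by
    intro s hs
    have : 0 < 1 + s := by have := mem_Ioi.1 hs; linarith
    apply ContinuousAt.continuousWithinAt
    exact continuousAt_const.div
      ((continuousAt_const.add continuousAt_id).rpow_const (Or.inl this.ne'))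
      (Real.rpow_pos_of_pos this α).ne'
  have hGd : ∀ t, -1 < t → HasDerivAt G (c / (1 + t) ^ α) t := by
    intro t ht
    rw [hG]
    refine intervalIntegral.integral_hasDerivAt_right ?_ ?_ ?_
    · apply ContinuousOn.intervalIntegrable
      refine hcont.mono ?_
      intro s hs
      rw [mem_uIcc] at hs
      rw [mem_Ioi]
      rcases hs with hs | hs <;> linarith
    · exact hcont.stronglyMeasurableAtFilter isOpen_Ioi t ht
    · exact hcont.continuousAt (Ioi_mem_nhds ht)
  have hEc : ContinuousOn (fun s => Real.exp (-G s)) (Ioi (-1)) := fun s hs =>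
    ((hGd s hs).continuousAt.neg.rexp).continuousWithinAt
  have hEint : ∀ a b, -1 < a → -1 < b →
      IntervalIntegrable (fun s => Real.exp (-G s)) volume a b := by
    intro a b ha hb
    apply ContinuousOn.intervalIntegrable
    refine hEc.mono ?_
    intro s hs
    rw [mem_uIcc] at hs
    rw [mem_Ioi]
    rcases hs with hs | hs <;> linarith
  -- threshold
  obtain ⟨T, hT0, hT⟩ : ∃ T, 0 ≤ T ∧ ∀ t, T ≤ t → α * (1 + t) ^ (α - 1) / c ≤ 1 / 3 := by
    have h1 : Tendsto (fun t : ℝ => α * (1 + t) ^ (α - 1) / c) atTop (nhds (α * 0 / c)) := by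
      refine Tendsto.div_const (Tendsto.const_mul _ ?_) _
      have h2 := tendsto_rpow_neg_atTop (show 0 < 1 - α by linarith)
      rw [neg_sub] at h2
      exact h2.comp (tendsto_atTop_add_const_left _ 1 tendsto_id)
    have h3 := h1.eventually (eventually_le_nhds (show α * 0 / c < 1 / 3 by norm_num))
    obtain ⟨T, hT⟩ := eventually_atTop.1 h3
    exact ⟨max T 0, le_max_right _ _, fun t ht => hT t ((le_max_left _ _).trans ht)⟩
  set Q : ℝ → ℝ := fun t => 3 / 2 * ((1 + t) ^ α / c) * Real.exp (-G t) with hQ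
  have hQ0 : ∀ t, 0 ≤ t → 0 ≤ Q t := fun t ht => by positivity
  have hQd : ∀ t, 0 ≤ t → HasDerivAt Q
      (3 / 2 * (α * (1 + t) ^ (α - 1) / c - 1) * Real.exp (-G t)) t := by
    intro t ht
    have ht1 : 0 < 1 + t := by linarith
    have h1 : HasDerivAt (fun t : ℝ => (1 + t) ^ α) (α * (1 + t) ^ (α - 1)) t := by
      have := ((hasDerivAt_id t).const_add 1).rpow_const (p := α) (Or.inl ht1.ne')
      simpa using this
    have h2 := ((h1.div_const c).const_mul (3 / 2)).mul (hGd t (by linarith)).neg.exp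
    refine h2.congr_deriv ?_
    have := (Real.rpow_pos_of_pos ht1 α).ne'
    rw [Pi.neg_apply]
    field_simp
    ring
  have hbound : ∀ t s, T ≤ t → t ≤ s → ∫ r in t..s, Real.exp (-G r) ≤ Q t := by
    intro t s ht hts
    have key := intervalIntegral.integral_le_sub_of_hasDeriv_right_of_le
      (g := fun r => - Q r) (φ := fun r => Real.exp (-G r)) hts
      (fun r hr => ((hQd r (hT0.trans (ht.trans hr.1))).neg).continuousAt.continuousWithinAt)
      (fun r hr => ((hQd r (hT0.trans (ht.trans hr.1.le))).neg).hasDerivWithinAt)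
      ((hEc.mono (fun r hr => by
        have := hr.1
        rw [mem_Ioi]; linarith)).integrableOn_Icc)
      (by
        intro r hr
        have h1 := hT r (ht.trans hr.1.le)
        have h2 := Real.exp_pos (-G r)
        nlinarith)
    have := hQ0 s (hT0.trans (ht.trans hts))
    linarith
  have hIoiT : ∀ t, T ≤ t → IntegrableOn (fun s => Real.exp (-G s)) (Ioi t) := by
    intro t ht
    refine integrableOn_Ioi_of_intervalIntegral_norm_bounded (l := atTop) (b := fun s : ℝ => max t s)
      (Q t) t ?_ ?_ ?_
    · intro s
      have h1 := hEint t (max t s) (by linarith) (by have := le_max_left t s; linarith)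
      exact h1.1
    · exact tendsto_atTop_mono (fun s => le_max_right _ _) tendsto_id
    · refine Eventually.of_forall fun s => ?_
      simpa using hbound t (max t s) ht (le_max_left _ _)
  have hIoi0 : IntegrableOn (fun s => Real.exp (-G s)) (Ioi 0) := by
    rw [← Ioc_union_Ioi_eq_Ioi hT0]
    exact (hEint 0 T (by norm_num) (by linarith)).1.union (hIoiT T le_rfl)
  have hPeq : ∀ t, 0 ≤ t → (∫ s in Ioi 0, Real.exp (-G s)) - ∫ s in (0:ℝ)..t, Real.exp (-G s)
      = ∫ s in Ioi t, Real.exp (-G s) := by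
    intro t ht
    rw [← intervalIntegral.integral_Ioi_sub_Ioi hIoi0 ht]
    ring
  refine ⟨fun t ht => hGd t (by linarith),
    fun t => (∫ s in Ioi 0, Real.exp (-G s)) - ∫ s in (0:ℝ)..t, Real.exp (-G s), hPeq,
    ?_, ?_, T, hT0, ?_⟩
  · intro t ht
    have h1 : HasDerivAt (fun t => ∫ s in (0:ℝ)..t, Real.exp (-G s)) (Real.exp (-G t)) t := by
      refine intervalIntegral.integral_hasDerivAt_right
        (hEint 0 t (by norm_num) (by linarith)) ?_ ?_
      · exact hEc.stronglyMeasurableAtFilter isOpen_Ioi t (by rw [mem_Ioi]; linarith)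
      · exact hEc.continuousAt (Ioi_mem_nhds (by linarith))
    simpa using h1.const_sub (∫ s in Ioi 0, Real.exp (-G s))
  · intro t ht
    simp only
    rw [hPeq t ht]
    rw [setIntegral_pos_iff_support_of_nonneg_ae]
    · have : Function.support (fun s => Real.exp (-G s)) = univ := by
        ext s; simp [(Real.exp_pos _).ne']
      rw [this]; simp
    · exact Eventually.of_forall fun s => (Real.exp_pos _).le
    · exact hIoi0.mono_set (Ioi_subset_Ioi ht)
  · intro t ht
    have ht0 := hT0.trans ht
    simp only
    rw [hPeq t ht0]
    have h1 : ∫ s in Ioi t, Real.exp (-G s) ≤ Q t := by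
      refine le_of_tendsto
        (intervalIntegral_tendsto_integral_Ioi t (hIoiT t ht) (tendsto_id (α := ℝ))) ?_
      filter_upwards [eventually_ge_atTop t] with s hs
      exact hbound t s ht hs
    have hpow := Real.rpow_pos_of_pos (show 0 < 1 + t by linarith) α
    calc c / (1 + t) ^ α * (Real.exp (G t) * ∫ s in Ioi t, Real.exp (-G s))
        ≤ c / (1 + t) ^ α * (Real.exp (G t) * Q t) := by gcongr
      _ = 3 / 2 := by
        simp only [hQ]
        rw [Real.exp_neg]
        field_simp

theorem heavy_ball_trajectory_bounded
    {H : Type*} [NormedAddCommGroup H] [InnerProductSpace ℝ H] [CompleteSpace H]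
    (c α : ℝ) (hc : 0 < c) (hα0 : 0 ≤ α) (hα1 : α < 1)
    (Φ : H → ℝ) (Φ' : H → H) (Φstar : ℝ)
    (hΦconv : ConvexOn ℝ Set.univ Φ)
    (hΦdiff : ∀ u : H, HasGradientAt Φ (Φ' u) u)
    (hΦcont : Continuous Φ')
    (hargmin : {v : H | ∀ u, Φ v ≤ Φ u}.Nonempty)
    (hΦstar : ∀ v ∈ {v : H | ∀ u, Φ v ≤ Φ u}, Φ v = Φstar)
    (g : ℝ → H) (hg : IntegrableOn g (Ici (0:ℝ)))
    (x x' x'' : ℝ → H)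
    (hx1 : ∀ t ∈ Ici (0:ℝ), HasDerivAt x (x' t) t)
    (hx2 : ∀ t ∈ Ici (0:ℝ), HasDerivAt x' (x'' t) t)
    (hode : ∀ t ∈ Ici (0:ℝ),
      x'' t + (c / (1 + t) ^ α) • x' t + Φ' (x t) = g t)
    (hgα : IntegrableOn (fun t => (1 + t) ^ α * ‖g t‖) (Ici (0:ℝ))) :
    (∃ M : ℝ, ∀ t ≥ (0:ℝ), ‖x t‖ ≤ M) ∧
    ∀ xstar ∈ {v : H | ∀ u, Φ v ≤ Φ u}, ∃ M : ℝ, ∀ t ≥ (0:ℝ),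
      ‖x t - xstar +
        (Real.exp (∫ s in (0:ℝ)..t, c / (1 + s) ^ α) *
          ∫ s in Ioi t, Real.exp (-(∫ u in (0:ℝ)..s, c / (1 + u) ^ α))) • x' t‖
        ≤ M := by
  set G : ℝ → ℝ := fun t => ∫ s in (0:ℝ)..t, c / (1 + s) ^ α with hG
  obtain ⟨hGd, P, hPeq, hPd, hPpos, T, hT0, hT⟩ := hb_damping c α hc hα1 G hG
  have hh : ∀ t, 0 ≤ t → HasDerivAt (fun t => Real.exp (G t) * P t)
      (c / (1 + t) ^ α * (Real.exp (G t) * P t) - 1) t := by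
    intro t ht
    refine ((hGd t ht).exp.mul (hPd t ht)).congr_deriv ?_
    rw [Real.exp_neg]
    field_simp
    ring
  have main : ∀ p ∈ {v : H | ∀ u, Φ v ≤ Φ u}, ∃ M : ℝ, ∀ t ≥ (0:ℝ),
      ‖x t - p + (Real.exp (G t) * P t) • x' t‖ ≤ M := by
    intro p hp
    refine hb_u_bounded Φ Φ' hΦconv hΦdiff (fun t => c / (1 + t) ^ α)
      (fun t => Real.exp (G t) * P t) g x x' x''
      (fun t => (3 / 2 / c) * ((1 + t) ^ α * ‖g t‖)) T hT0 hx1 hx2 hode hh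
      (fun t ht => mul_pos (Real.exp_pos _) (hPpos t ht)) hT (hgα.const_mul _)
      (fun t ht => by positivity) ?_ p hp
    intro t ht
    have hpow := Real.rpow_pos_of_pos (show 0 < 1 + t by linarith) α
    have h1 : Real.exp (G t) * P t ≤ 3 / 2 / c * (1 + t) ^ α := by
      have h2 := hT t ht
      rw [div_mul_eq_mul_div, div_le_iff₀ hpow] at h2
      rw [div_mul_eq_mul_div, le_div_iff₀ hc]
      linarith
    calc Real.exp (G t) * P t * ‖g t‖ ≤ 3 / 2 / c * (1 + t) ^ α * ‖g t‖ :=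
          mul_le_mul_of_nonneg_right h1 (norm_nonneg _)
      _ = _ := by ring
  constructor
  · obtain ⟨p, hp⟩ := hargmin
    obtain ⟨M, hM⟩ := main p hp
    refine ⟨‖x 0 - p‖ + M + ‖p‖, fun t ht => ?_⟩
    have h1 := hb_y_bounded G P (fun t => x t - p) x' M
      (fun t ht => (hx1 t ht).sub_const p) hPd hPpos hM t ht
    have h2 := norm_add_le (x t - p) p
    rw [sub_add_cancel] at h2
    linarith
  · intro p hp
    obtain ⟨M, hM⟩ := main p hp
    refine ⟨M, fun t ht => ?_⟩
    have h1 := hM t ht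
    rw [hPeq t ht] at h1
    exact h1
end

section
/- Let x be a solution of the heavy ball equation with vanishing damping and source term g satisfying ∫₀^∞ (1+t)^α ‖g(t)‖ dt < ∞. Then ∫₀^∞ (1+t)^α ‖x'(t)‖² dt < ∞. -/
open MeasureTheory Filter Real Set RealInnerProductSpace

theorem hb_abstract (T K : ℝ) (hK : 0 ≤ K) (V V' F a : ℝ → ℝ)
    (hV : ∀ t, T ≤ t → HasDerivAt V (V' t) t) (hV0 : ∀ t, T ≤ t → 0 ≤ V t)
    (ha0 : ∀ t, T ≤ t → 0 ≤ a t) (ha : IntegrableOn a (Ici T))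
    (hF : ContinuousOn F (Ici T)) (hF0 : ∀ t, T ≤ t → 0 ≤ F t)
    (hle : ∀ t, T ≤ t → V' t ≤ - F t + a t * (2 + K * V t)) :
    IntegrableOn F (Ici T) := by
  have hVc : ContinuousOn V (Ici T) := fun t ht => (hV t ht).continuousAt.continuousWithinAt
  have hai : ∀ u v, T ≤ u → u ≤ v → IntervalIntegrable a volume u v := by
    intro u v hu huv
    rw [intervalIntegrable_iff_integrableOn_Icc_of_le huv]
    exact ha.mono_set (fun t ht => hu.trans ht.1)
  have hFi : ∀ u v, T ≤ u → u ≤ v → IntervalIntegrable F volume u v := by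
    intro u v hu huv
    apply ContinuousOn.intervalIntegrable
    rw [uIcc_of_le huv]
    exact hF.mono (fun t ht => hu.trans ht.1)
  have haVi : ∀ u v, T ≤ u → u ≤ v → IntervalIntegrable (fun t => a t * (2 + K * V t)) volume u v := by
    intro u v hu huv
    apply (hai u v hu huv).mul_continuousOn
    rw [uIcc_of_le huv]
    have := hVc.mono (fun t (ht : t ∈ Icc u v) => hu.trans ht.1)
    fun_prop
  have key : ∀ u v, T ≤ u → u ≤ v →
      V v - V u ≤ - (∫ t in u..v, F t) + ∫ t in u..v, a t * (2 + K * V t) := by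
    intro u v hu huv
    have h1 := intervalIntegral.sub_le_integral_of_hasDeriv_right_of_le (g := V) (g' := V')
      (φ := fun t => - F t + a t * (2 + K * V t)) huv
      (hVc.mono (fun t ht => hu.trans ht.1))
      (fun t ht => (hV t (hu.trans ht.1.le)).hasDerivWithinAt)
      ((intervalIntegrable_iff_integrableOn_Icc_of_le huv).1
        ((hFi u v hu huv).neg.add (haVi u v hu huv)))
      (fun t ht => hle t (hu.trans ht.1.le))
    have h2 := intervalIntegral.integral_add (hFi u v hu huv).neg (haVi u v hu huv)
    have h3 : ∫ t in u..v, (-F) t = -(∫ t in u..v, F t) := intervalIntegral.integral_neg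
    rw [h3] at h2
    exact h1.trans h2.le
  set I := ∫ t in Ioi T, a t with hI
  have htend : Tendsto (fun v => ∫ t in T..v, a t) atTop (nhds I) :=
    intervalIntegral_tendsto_integral_Ioi T (ha.mono_set Ioi_subset_Ici_self) tendsto_id
  have haI : ∀ v, T ≤ v → ∫ t in T..v, a t ≤ I := by
    intro v hv
    rw [intervalIntegral.integral_of_le hv]
    apply setIntegral_mono_set (ha.mono_set Ioi_subset_Ici_self)
    · filter_upwards [ae_restrict_mem measurableSet_Ioi] with t ht using ha0 t (le_of_lt ht)
    · exact (Ioc_subset_Ioi_self).eventuallyLE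
  obtain ⟨S, hTS, hS⟩ : ∃ S, T ≤ S ∧ I - (1 / (2 * (K + 1))) < ∫ t in T..S, a t := by
    have hpos : I - (1 / (2 * (K + 1))) < I := by
      have : 0 < 1 / (2 * (K + 1)) := by positivity
      linarith
    obtain ⟨S, h1, h2⟩ := ((htend.eventually (lt_mem_nhds hpos)).and (eventually_ge_atTop T)).exists
    exact ⟨S, h2, h1⟩
  have hsmall : ∀ v, S ≤ v → ∫ t in S..v, a t ≤ 1 / (2 * (K + 1)) := by
    intro v hv
    have := intervalIntegral.integral_add_adjacent_intervals (hai T S le_rfl hTS) (hai S v hTS hv)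
    have := haI v (hTS.trans hv)
    linarith
  have hbound : ∀ u v N, T ≤ u → u ≤ v → (∀ t ∈ Icc u v, V t ≤ N) →
      ∫ t in u..v, a t * (2 + K * V t) ≤ (∫ t in u..v, a t) * (2 + K * N) := by
    intro u v N hu huv hN
    rw [← intervalIntegral.integral_mul_const]
    apply intervalIntegral.integral_mono_on huv (haVi u v hu huv) ((hai u v hu huv).mul_const _)
    intro t ht
    have := hN t ht
    have := ha0 t (hu.trans ht.1)
    gcongr
  set M := 2 * V S + 4 with hM
  have hVM : ∀ v, S ≤ v → V v ≤ M := by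
    intro v hv
    obtain ⟨m, hm, hmax⟩ := isCompact_Icc.exists_isMaxOn (nonempty_Icc.2 hv)
      (hVc.mono (fun t ht => hTS.trans ht.1) : ContinuousOn V (Icc S v))
    have h1 := key S m hTS hm.1
    have h2 := hbound S m (V m) hTS hm.1 (fun t ht => hmax ⟨ht.1, ht.2.trans hm.2⟩)
    have h3 : 0 ≤ ∫ t in S..m, F t :=
      intervalIntegral.integral_nonneg hm.1 (fun t ht => hF0 t (hTS.trans ht.1))
    have h4 := hsmall m hm.1
    have h5 := hV0 m (hTS.trans hm.1)
    have h6 : (∫ t in S..m, a t) * (2 + K * V m) ≤ 1 / (2 * (K + 1)) * (2 + K * V m) := by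
      gcongr
    have h7 : 1 / (2 * (K + 1)) * (2 + K * V m) ≤ 1 + V m / 2 := by
      rw [div_mul_eq_mul_div, div_le_iff₀ (by positivity)]
      nlinarith [mul_nonneg hK h5]
    have h8 : V v ≤ V m := hmax ⟨hv, le_rfl⟩
    have := hV0 S hTS
    linarith
  have hSint : IntegrableOn F (Ioi S) := by
    apply integrableOn_Ioi_of_intervalIntegral_norm_bounded (V S + (1 / (2 * (K + 1))) * (2 + K * M)) S
      (b := fun x : ℝ => x) (l := atTop) _ tendsto_id
    · filter_upwards [eventually_ge_atTop S] with v hv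
      have h1 := key S v hTS hv
      have h2 := hbound S v M hTS hv (fun t ht => hVM t ht.1)
      have h4 := hsmall v hv
      have hM0 : 0 ≤ M := by have := hV0 S hTS; positivity
      have h6 : (∫ t in S..v, a t) * (2 + K * M) ≤ 1 / (2 * (K + 1)) * (2 + K * M) := by
        gcongr
      have h5 := hV0 v (hTS.trans hv)
      have h7 : ∫ t in S..v, ‖F t‖ = ∫ t in S..v, F t := by
        apply intervalIntegral.integral_congr
        intro t ht
        rw [uIcc_of_le hv] at ht
        exact Real.norm_of_nonneg (hF0 t (hTS.trans ht.1))
      rw [h7]; linarith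
    · intro v
      rcases le_total S v with hv | hv
      · exact (intervalIntegrable_iff_integrableOn_Ioc_of_le hv).1 (hFi S v hTS hv)
      · rw [Ioc_eq_empty (not_lt.2 hv)]; exact integrableOn_empty
  have : Ici T ⊆ Icc T S ∪ Ioi S := by
    intro t ht
    rcases le_or_gt t S with h | h
    · exact Or.inl ⟨ht, h⟩
    · exact Or.inr h
  exact (((hF.mono Icc_subset_Ici_self).integrableOn_Icc).union hSint).mono_set this

theorem hb_real (c α s P d n y G m gx gz nx nz φ : ℝ) (hc : 0 < c) (hα0 : 0 ≤ α) (hα1 : α < 1)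
    (hs : 1 ≤ s) (hP : P = d * s) (hd : 0 < d) (hd1 : d ≤ 1) (hdc : d ≤ c / 12)
    (hn : 0 ≤ n) (hy : 0 ≤ y) (hG : 0 ≤ G) (hm : |m| ≤ n * y) (hgx : gx ≤ G * n)
    (hgz : gz ≤ G * y) (hφ : 0 ≤ φ) (hnz : φ ≤ nz) :
    let V := P ^ 2 * (n ^ 2 / 2 + φ) + 2 * α * (P * d) * m + α * (c * d - (2 * α - 1) * d ^ 2) * y ^ 2
    (P ^ 2 * n ^ 2 / 4 + α * (c / 2) * d * y ^ 2 ≤ V) ∧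
    2 * α * (P * d) * (n ^ 2 / 2 + φ) + P ^ 2 * (gx - c / P * n ^ 2) +
      2 * α * ((2 * α - 1) * d ^ 2 * m + P * d * (gz - c / P * m - nz + n ^ 2)) +
      α * ((c * (α - 1) * d / s - (2 * α - 1) * (2 * α - 2) * d ^ 2 / s) * y ^ 2
        + 2 * (c * d - (2 * α - 1) * d ^ 2) * m) ≤ - (c / 2 * (P * n ^ 2)) + P * G * (2 + (4 + 2 / c) * V) := by
  intro V
  have hP0 : 0 < P := by rw [hP]; positivity
  have hm' := abs_le.1 hm
  have hV : P ^ 2 * n ^ 2 / 4 + α * (c / 2) * d * y ^ 2 ≤ V := by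
    have e1 : 2 * α * (P * d) * (- (n * y)) ≤ 2 * α * (P * d) * m := by
      gcongr; exact hm'.1
    have e2 : 0 ≤ (P * n / 2 - 2 * α * d * y) ^ 2 := sq_nonneg _
    have e3 : 0 ≤ P ^ 2 * φ := by positivity
    have e4 : 0 ≤ α * d * y ^ 2 * (c / 2 - (6 * α - 1) * d) := by
      have : 0 ≤ c / 2 - (6 * α - 1) * d := by nlinarith
      positivity
    simp only [V]
    nlinarith
  refine ⟨hV, ?_⟩
  clear_value V
  have e1 : P ^ 2 * (gx - c / P * n ^ 2) = P ^ 2 * gx - c * P * n ^ 2 := by field_simp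
  have e2 : P * d * (gz - c / P * m - nz + n ^ 2) = P * d * (gz - nz + n ^ 2) - c * d * m := by
    field_simp; ring
  have e3 : (c * (α - 1) * d / s - (2 * α - 1) * (2 * α - 2) * d ^ 2 / s)
      = - ((1 - α) * (d / s) * (c - 2 * (2 * α - 1) * d)) := by field_simp; ring
  have e4 : 0 ≤ α * ((1 - α) * (d / s) * (c - 2 * (2 * α - 1) * d) * y ^ 2) := by
    have : 0 ≤ c - 2 * (2 * α - 1) * d := by nlinarith
    have : 0 ≤ 1 - α := by linarith
    positivity
  have e5 : 0 ≤ P * n ^ 2 * (c / 2 - 3 * α * d) := by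
    have : 0 ≤ c / 2 - 3 * α * d := by nlinarith
    positivity
  have e6 : P ^ 2 * gx ≤ P ^ 2 * (G * n) := by gcongr
  have e7 : 2 * α * (P * d) * gz ≤ 2 * α * (P * d) * (G * y) := by gcongr
  have e8 : 2 * α * (P * d) * φ ≤ 2 * α * (P * d) * nz := by gcongr
  have e9 : P * n + 2 * α * d * y ≤ 2 + (4 + 2 / c) * V := by
    have f1 : 0 ≤ P ^ 2 * n ^ 2 / 4 := by positivity
    have f2 : 0 ≤ α * (c / 2) * d * y ^ 2 := by positivity
    have f3 : 4 * (P ^ 2 * n ^ 2 / 4) ≤ 4 * V := by linarith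
    have f4 : 2 / c * (α * (c / 2) * d * y ^ 2) ≤ 2 / c * V := by
      gcongr; linarith
    have f5 : 2 / c * (α * (c / 2) * d * y ^ 2) = α * d * y ^ 2 := by field_simp
    have f6 : 0 ≤ α * d * (y - 1) ^ 2 := by positivity
    have f7 : α * d ≤ 1 := mul_le_one₀ hα1.le hd.le hd1
    have f8 : P * n ≤ 1 + P ^ 2 * n ^ 2 := by nlinarith only [sq_nonneg (P * n - 1)]
    rw [f5] at f4
    linarith only [f3, f4, f6, f7, f8]
  have e10 := mul_le_mul_of_nonneg_left e9 (mul_nonneg hP0.le hG)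
  rw [e1, e2, e3]
  linarith only [e4, e5, e6, e7, e8, e10]

theorem hb_convex {H : Type*} [NormedAddCommGroup H] [InnerProductSpace ℝ H] [CompleteSpace H]
    (Φ : H → ℝ) (Φ' : H → H)
    (hΦconv : ConvexOn ℝ Set.univ Φ)
    (hΦdiff : ∀ u : H, HasGradientAt Φ (Φ' u) u) (u p : H) :
    Φ u - Φ p ≤ ⟪Φ' u, u - p⟫ := by
  have h1 : ConvexOn ℝ Set.univ (fun r : ℝ => Φ (AffineMap.lineMap p u r)) := by
    have := hΦconv.comp_affineMap (AffineMap.lineMap p u : ℝ →ᵃ[ℝ] H)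
    rw [preimage_univ] at this
    exact this
  have h2 : HasDerivAt (fun r : ℝ => Φ (AffineMap.lineMap p u r)) ⟪Φ' u, u - p⟫ 1 := by
    have h3 : HasDerivAt (fun r : ℝ => (AffineMap.lineMap p u r : H)) (u - p) 1 :=
      AffineMap.hasDerivAt_lineMap
    have h4 : HasFDerivAt Φ (InnerProductSpace.toDual ℝ H (Φ' u)) (AffineMap.lineMap p u (1:ℝ)) := by
      simpa using (hΦdiff u).hasFDerivAt
    simpa [Function.comp_def] using h4.comp_hasDerivAt (1:ℝ) h3
  have := h1.slope_le_of_hasDerivAt (mem_univ 0) (mem_univ 1) one_pos h2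
  simpa [slope_def_field] using this

theorem heavy_ball_velocity_integrable
    {H : Type*} [NormedAddCommGroup H] [InnerProductSpace ℝ H] [CompleteSpace H]
    (c α : ℝ) (hc : 0 < c) (hα0 : 0 ≤ α) (hα1 : α < 1)
    (Φ : H → ℝ) (Φ' : H → H) (Φstar : ℝ)
    (hΦconv : ConvexOn ℝ Set.univ Φ)
    (hΦdiff : ∀ u : H, HasGradientAt Φ (Φ' u) u)
    (hΦcont : Continuous Φ')
    (hargmin : {v : H | ∀ u, Φ v ≤ Φ u}.Nonempty)
    (hΦstar : ∀ v ∈ {v : H | ∀ u, Φ v ≤ Φ u}, Φ v = Φstar)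
    (g : ℝ → H) (hg : IntegrableOn g (Ici (0:ℝ)))
    (x x' x'' : ℝ → H)
    (hx1 : ∀ t ∈ Ici (0:ℝ), HasDerivAt x (x' t) t)
    (hx2 : ∀ t ∈ Ici (0:ℝ), HasDerivAt x' (x'' t) t)
    (hode : ∀ t ∈ Ici (0:ℝ),
      x'' t + (c / (1 + t) ^ α) • x' t + Φ' (x t) = g t)
    (hgα : IntegrableOn (fun t => (1 + t) ^ α * ‖g t‖) (Ici (0:ℝ))) :
    IntegrableOn (fun t => (1 + t) ^ α * ‖x' t‖ ^ 2) (Ici (0:ℝ)) := by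
  obtain ⟨p, hp⟩ := hargmin
  have hp' : ∀ u, Φ p ≤ Φ u := hp
  set P : ℝ → ℝ := fun t => (1 + t) ^ α with hPdef
  set D : ℝ → ℝ := fun t => P t / (1 + t) with hDdef
  have hPpos : ∀ t, 0 ≤ t → 0 < P t := fun t ht => by
    have : 0 < 1 + t := by linarith
    exact Real.rpow_pos_of_pos this _
  have hDrpow : ∀ t, 0 ≤ t → D t = (1 + t) ^ (-(1 - α)) := fun t ht => by
    have : 0 < 1 + t := by linarith
    rw [show -(1 - α) = α - 1 by ring, Real.rpow_sub_one this.ne']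
  have hPd : ∀ t, 0 ≤ t → HasDerivAt P (α * D t) t := fun t ht => by
    have hs : 0 < 1 + t := by linarith
    have := ((hasDerivAt_id t).const_add 1).rpow_const (p := α) (Or.inl hs.ne')
    simp only [id] at this
    convert this using 1
    rw [Real.rpow_sub_one hs.ne']; ring
  have hDd : ∀ t, 0 ≤ t → HasDerivAt D ((α - 1) * D t / (1 + t)) t := fun t ht => by
    have hs : 0 < 1 + t := by linarith
    have := (hPd t ht).div ((hasDerivAt_id t).const_add 1) hs.ne'
    refine HasDerivAt.congr_deriv this ?_
    simp only [hDdef, id]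
    field_simp
  have hDlim : Tendsto D atTop (nhds 0) := by
    have h1 := (tendsto_rpow_neg_atTop (y := 1 - α) (by linarith)).comp
      (tendsto_atTop_add_const_left atTop (1:ℝ) tendsto_id)
    refine h1.congr' ?_
    filter_upwards [eventually_ge_atTop 0] with t ht
    simp [hDrpow t ht]
  obtain ⟨T, hT⟩ : ∃ T, ∀ t, T ≤ t → 0 ≤ t ∧ D t ≤ 1 ∧ D t ≤ c / 12 := by
    have h12 : (0:ℝ) < c / 12 := by positivity
    have := (eventually_ge_atTop (0:ℝ)).and ((hDlim.eventually (gt_mem_nhds one_pos)).and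
      (hDlim.eventually (gt_mem_nhds h12)))
    obtain ⟨T, hT⟩ := eventually_atTop.1 this
    exact ⟨T, fun t ht => ⟨(hT t ht).1, (hT t ht).2.1.le, (hT t ht).2.2.le⟩⟩
  have hT0 : 0 ≤ T := (hT T le_rfl).1
  set V : ℝ → ℝ := fun t => P t ^ 2 * (‖x' t‖ ^ 2 / 2 + (Φ (x t) - Φ p))
    + 2 * α * (P t * D t) * ⟪x' t, x t - p⟫
    + α * (c * D t - (2 * α - 1) * D t ^ 2) * ‖x t - p‖ ^ 2 with hVdef
  set V' : ℝ → ℝ := fun t =>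
    2 * α * (P t * D t) * (‖x' t‖ ^ 2 / 2 + (Φ (x t) - Φ p))
      + P t ^ 2 * (⟪g t, x' t⟫ - c / P t * ‖x' t‖ ^ 2) +
      2 * α * ((2 * α - 1) * D t ^ 2 * ⟪x' t, x t - p⟫ +
        P t * D t * (⟪g t, x t - p⟫ - c / P t * ⟪x' t, x t - p⟫ - ⟪Φ' (x t), x t - p⟫ + ‖x' t‖ ^ 2)) +
      α * ((c * (α - 1) * D t / (1 + t) - (2 * α - 1) * (2 * α - 2) * D t ^ 2 / (1 + t)) * ‖x t - p‖ ^ 2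
        + 2 * (c * D t - (2 * α - 1) * D t ^ 2) * ⟪x' t, x t - p⟫) with hV'def
  have hVd : ∀ t, 0 ≤ t → HasDerivAt V (V' t) t := by
    intro t ht
    have hs : 0 < 1 + t := by linarith
    have hxz : HasDerivAt (fun t => x t - p) (x' t) t := (hx1 t ht).sub_const p
    have hΦx : HasDerivAt (fun t => Φ (x t)) ⟪Φ' (x t), x' t⟫ t := by
      simpa [Function.comp_def] using (hΦdiff (x t)).hasFDerivAt.comp_hasDerivAt t (hx1 t ht)
    have hE := ((hx2 t ht).norm_sq.div_const 2).add (hΦx.sub_const (Φ p))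
    have h1 := ((hPd t ht).pow 2).mul hE
    have h2 := (((hPd t ht).mul (hDd t ht)).const_mul (2 * α)).mul ((hx2 t ht).inner ℝ hxz)
    have h3 := ((((hDd t ht).const_mul c).sub (((hDd t ht).pow 2).const_mul (2 * α - 1))).const_mul α).mul
      hxz.norm_sq
    have hx'' : x'' t = g t - (c / P t) • x' t - Φ' (x t) := by
      rw [← hode t ht]; simp only [hPdef]; abel
    have hPD : P t = D t * (1 + t) := by simp only [hDdef]; field_simp
    refine ((h1.add h2).add h3).congr_deriv ?_
    simp only [hV'def, hx'', inner_sub_left, inner_sub_right, inner_smul_left, inner_smul_right,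
      real_inner_self_eq_norm_sq, Pi.add_apply, Pi.mul_apply, Pi.pow_apply, Pi.sub_apply]
    rw [real_inner_comm (g t) (x' t), real_inner_comm (Φ' (x t)) (x' t),
      real_inner_comm (x t) (x' t), real_inner_comm p (x' t)]
    simp only [RCLike.conj_to_real]
    have hD0 : D t ≠ 0 := by
      have := hPpos t ht
      simp only [hDdef]; positivity
    rw [hPD]
    field_simp
    ring
  have hmain := fun t (ht : T ≤ t) => hb_real c α (1 + t) (P t) (D t) ‖x' t‖ ‖x t - p‖ ‖g t‖
    ⟪x' t, x t - p⟫ ⟪g t, x' t⟫ ⟪g t, x t - p⟫ 0 ⟪Φ' (x t), x t - p⟫ (Φ (x t) - Φ p) hc hα0 hα1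
    (by linarith [(hT t ht).1])
    (by have : 0 < 1 + t := by linarith [(hT t ht).1]
        simp only [hDdef]; field_simp)
    (by have := hPpos t (hT t ht).1
        have : 0 < 1 + t := by linarith [(hT t ht).1]
        simp only [hDdef]; positivity)
    (hT t ht).2.1 (hT t ht).2.2 (norm_nonneg _) (norm_nonneg _) (norm_nonneg _)
    (abs_real_inner_le_norm _ _) (real_inner_le_norm _ _) (real_inner_le_norm _ _)
    (sub_nonneg.2 (hp' _)) (hb_convex Φ Φ' hΦconv hΦdiff _ _)
  have hPc : ∀ t, 0 ≤ t → ContinuousAt P t := fun t ht => (hPd t ht).continuousAt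
  have hFc : ContinuousOn (fun t => P t * ‖x' t‖ ^ 2) (Ici (0:ℝ)) := fun t ht =>
    ((hPc t ht).mul ((hx2 t ht).continuousAt.norm.pow 2)).continuousWithinAt
  have hFT : IntegrableOn (fun t => c / 2 * (P t * ‖x' t‖ ^ 2)) (Ici T) := by
    apply hb_abstract T (4 + 2 / c) (by positivity) V V' _ (fun t => P t * ‖g t‖)
    · exact fun t ht => hVd t (hT0.trans ht)
    · intro t ht
      refine le_trans ?_ (hmain t ht).1
      have h1 := hPpos t (hT t ht).1
      have : 0 < 1 + t := by linarith [(hT t ht).1]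
      have h2 : 0 < D t := by simp only [hDdef]; positivity
      positivity
    · exact fun t ht => mul_nonneg (hPpos t (hT0.trans ht)).le (norm_nonneg _)
    · exact hgα.mono_set (Ici_subset_Ici.2 hT0)
    · exact continuousOn_const.mul (hFc.mono (Ici_subset_Ici.2 hT0))
    · intro t ht
      have h1 := hPpos t (hT t ht).1
      positivity
    · exact fun t ht => (hmain t ht).2
  have hFT' : IntegrableOn (fun t => P t * ‖x' t‖ ^ 2) (Ici T) := by
    have := hFT.const_mul (2 / c)
    refine this.congr (Eventually.of_forall fun t => ?_)
    simp only
    field_simp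
  have hsub : Ici (0:ℝ) ⊆ Icc 0 T ∪ Ici T := by
    intro t ht
    rcases le_total t T with h | h
    · exact Or.inl ⟨ht, h⟩
    · exact Or.inr h
  exact (((hFc.mono Icc_subset_Ici_self).integrableOn_Icc).union hFT').mono_set hsub
end

section
/- Let x be a solution of the heavy ball equation with vanishing damping and source term g satisfying ∫₀^∞ (1+t)^α ‖g(t)‖ dt < ∞, and suppose the interior of argmin Φ is nonempty. Then ∫₀^∞ (1/γ(t)) ‖∇Φ(x(t))‖ dt < ∞. -/
open MeasureTheory Filter Real Set RealInnerProductSpace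

lemma hb_grad_ineq {H : Type*} [NormedAddCommGroup H] [InnerProductSpace ℝ H] [CompleteSpace H]
    (Φ : H → ℝ) (hΦconv : ConvexOn ℝ Set.univ Φ) (u G p : H) (h : HasGradientAt Φ G u) :
    Φ u + ⟪G, p - u⟫ ≤ Φ p := by
  have hc : ConvexOn ℝ univ (fun s : ℝ => Φ (u + s • (p - u))) := by
    have := hΦconv.comp_affineMap (AffineMap.lineMap u p)
    have e : (fun s : ℝ => Φ (u + s • (p - u))) = Φ ∘ (AffineMap.lineMap u p : ℝ →ᵃ[ℝ] H) := by
      funext s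
      simp [AffineMap.lineMap_apply, add_comm]
    rw [e]
    exact this
  have hl : HasDerivAt (fun s : ℝ => u + s • (p - u)) (p - u) 0 := by
    simpa using ((hasDerivAt_id (0:ℝ)).smul_const (p - u)).const_add u
  have hd : HasDerivAt (fun s : ℝ => Φ (u + s • (p - u))) ⟪G, p - u⟫ 0 := by
    have h1 : HasFDerivAt Φ (InnerProductSpace.toDual ℝ H G) (u + (0:ℝ) • (p - u)) := by
      simpa using h.hasFDerivAt
    exact (h1.comp_hasDerivAt (0:ℝ) hl).congr_deriv (by simp)
  have := hc.le_slope_of_hasDerivAt (mem_univ _) (mem_univ _) (zero_lt_one) hd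
  simp [slope_def_field] at this
  linarith

lemma hb_gronwall_s17 (T : ℝ) (W W' m q : ℝ → ℝ) (hW0 : ∀ t ∈ Ici T, 0 ≤ W t)
    (hW : ∀ t ∈ Ici T, HasDerivAt W (W' t) t) (hm : IntegrableOn m (Ici T))
    (hm0 : ∀ t ∈ Ici T, 0 ≤ m t) (hq : ContinuousOn q (Ici T)) (hq0 : ∀ t ∈ Ici T, 0 ≤ q t)
    (hle : ∀ t ∈ Ici T, W' t ≤ m t * (1 + W t) - q t) : IntegrableOn q (Ioi T) := by
  set M := ∫ t in Ici T, m t with hM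
  have hmb : ∀ b, T ≤ b → ∫ t in T..b, m t ≤ M := by
    intro b hb
    rw [intervalIntegral.integral_of_le hb]
    exact setIntegral_mono_set hm
      ((ae_restrict_iff' measurableSet_Ici).2 (Eventually.of_forall hm0))
      (Eventually.of_forall fun t ht => ht.1.le)
  have hsub : ∀ b, Icc T b ⊆ Ici T := fun b t ht => ht.1
  have hcont : ∀ b, ContinuousOn W (Icc T b) := fun b t ht =>
    (hW t (hsub b ht)).continuousAt.continuousWithinAt
  set L := log (1 + W T) + M with hL
  have hK : ∀ b ∈ Ici T, 1 + W b ≤ exp L := by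
    intro b hb
    have h1 : log (1 + W b) - log (1 + W T) ≤ ∫ t in T..b, m t := by
      refine intervalIntegral.sub_le_integral_of_hasDeriv_right_of_le
        (g := fun t => log (1 + W t)) (g' := fun t => W' t / (1 + W t)) hb ?_ ?_
        (hm.mono_set (hsub b)) ?_
      · refine ContinuousOn.log (continuousOn_const.add (hcont b)) fun t ht => ?_
        have := hW0 t (hsub b ht)
        positivity
      · intro t ht
        have ht' : t ∈ Ici T := ht.1.le
        have := hW0 t ht'
        exact (((hW t ht').const_add 1).log (by positivity)).hasDerivWithinAt
      · intro t ht
        have ht' : t ∈ Ici T := ht.1.le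
        have := hW0 t ht'
        rw [div_le_iff₀ (by positivity)]
        linarith [hle t ht', hq0 t ht']
    have h2 := hmb b hb
    have := hW0 b hb
    rw [← Real.log_le_iff_le_exp (by positivity)]
    linarith
  have hqi : ∀ b, IntegrableOn q (Icc T b) := fun b =>
    (hq.mono (hsub b)).integrableOn_Icc
  refine integrableOn_Ioi_of_intervalIntegral_norm_bounded (W T + exp L * M) T
    (l := atTop) (b := id) (fun b => (hqi b).mono_set Ioc_subset_Icc_self) tendsto_id ?_
  filter_upwards [eventually_ge_atTop T] with b hb
  have h1 : W b - W T ≤ ∫ t in T..b, (exp L * m t - q t) := by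
    refine intervalIntegral.sub_le_integral_of_hasDeriv_right_of_le hb (hcont b)
      (fun t ht => (hW t ht.1.le).hasDerivWithinAt)
      (((hm.mono_set (hsub b)).const_mul _).sub (hqi b)) ?_
    intro t ht
    have ht' : t ∈ Ici T := ht.1.le
    have := hle t ht'
    have := mul_le_mul_of_nonneg_left (hK t ht') (hm0 t ht')
    linarith
  have i1 : IntervalIntegrable m volume T b :=
    (intervalIntegrable_iff_integrableOn_Icc_of_le hb).2 (hm.mono_set (hsub b))
  have i2 : IntervalIntegrable q volume T b :=
    (intervalIntegrable_iff_integrableOn_Icc_of_le hb).2 (hqi b)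
  rw [intervalIntegral.integral_sub (i1.const_mul _) i2, intervalIntegral.integral_const_mul] at h1
  have h2 : ∫ t in T..b, ‖q t‖ = ∫ t in T..b, q t := by
    refine intervalIntegral.integral_congr fun t ht => ?_
    rw [uIcc_of_le hb] at ht
    exact Real.norm_of_nonneg (hq0 t ht.1)
  have h3 := hmb b hb
  have h4 := mul_le_mul_of_nonneg_left h3 (exp_pos L).le
  have h5 := hW0 b hb
  simp only [id]
  rw [h2]
  linarith

/-- lower bound on the Lyapunov function -/
lemma hb_lower_s17 (A A1 p d φ vy : ℝ) (hA : 0 < A) (hA1 : 0 ≤ A1) (hA1' : A1 ≤ 1 / 8)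
    (hφ : 0 ≤ φ) (hp : 0 ≤ p) (hd : 0 ≤ d) (hvy : |vy| ≤ p * d) :
    (A * p) ^ 2 / 8 ≤ A ^ 2 * (1 / 2 * p ^ 2 + φ) + 1 / 2 * (1 / 2 * d ^ 2 + A * vy - A1 * (1 / 2 * d ^ 2))
    ∧ d ^ 2 / 16 ≤ A ^ 2 * (1 / 2 * p ^ 2 + φ) + 1 / 2 * (1 / 2 * d ^ 2 + A * vy - A1 * (1 / 2 * d ^ 2)) := by
  have h1 : -(A * (p * d)) ≤ A * vy := by
    have := mul_le_mul_of_nonneg_left (abs_le.1 hvy).1 hA.le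
    linarith
  have h2 : A1 * (1 / 2 * d ^ 2) ≤ 1 / 8 * (1 / 2 * d ^ 2) :=
    mul_le_mul_of_nonneg_right hA1' (by positivity)
  have h3 : 0 ≤ A ^ 2 * φ := by positivity
  constructor
  · nlinarith [sq_nonneg (3 * (A * p) - 2 * d), sq_nonneg d]
  · nlinarith [sq_nonneg (A * p - d / 2), sq_nonneg d]

/-- upper bound on the derivative of the Lyapunov function -/
lemma hb_upper_s17 (A A1 A2 γ p d φ n G r vy gv gy Gv Gy wv wy W : ℝ) (hA : 0 < A)
    (hA1 : 0 ≤ A1) (hA1' : A1 ≤ 1 / 8) (hA2 : A2 ≤ 0) (hγ : A * γ = 1)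
    (hφ : 0 ≤ φ) (hn : 0 ≤ n) (hp : 0 ≤ p) (hd : 0 ≤ d)
    (hgv : gv ≤ n * p) (hgy : gy ≤ n * d)
    (hGy : φ + r * G ≤ Gy) (hwv : wv = gv - γ * p ^ 2 - Gv) (hwy : wy = gy - γ * vy - Gy)
    (hW1 : (A * p) ^ 2 / 8 ≤ W) (hW2 : d ^ 2 / 16 ≤ W) :
    2 * A * A1 * (1 / 2 * p ^ 2 + φ) + A ^ 2 * (wv + Gv)
      + 1 / 2 * (vy + (A1 * vy + A * (wy + p ^ 2)) - (A2 * (1 / 2 * d ^ 2) + A1 * vy))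
    ≤ (8 * (A * n) + 4 * (-A2)) * (1 + W) - r / 2 * (A * G) := by
  have e1 : A ^ 2 * (wv + Gv) = A ^ 2 * gv - A * p ^ 2 := by
    rw [hwv]; linear_combination (-A * p ^ 2) * hγ
  have e2 : A * wy = A * gy - vy - A * Gy := by
    rw [hwy]; linear_combination (-vy) * hγ
  have b1 : A ^ 2 * gv ≤ A ^ 2 * (n * p) := mul_le_mul_of_nonneg_left hgv (by positivity)
  have b2 : A * gy ≤ A * (n * d) := mul_le_mul_of_nonneg_left hgy hA.le
  have b3 : A * (φ + r * G) ≤ A * Gy := mul_le_mul_of_nonneg_left hGy hA.le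
  have b4 : A1 * (A * (p ^ 2 + 2 * φ)) ≤ 1 / 8 * (A * (p ^ 2 + 2 * φ)) :=
    mul_le_mul_of_nonneg_right hA1' (by positivity)
  have b5 : (A * n) * (A * p + d / 2) ≤ (A * n) * (8 * (1 + W)) :=
    mul_le_mul_of_nonneg_left (by nlinarith [sq_nonneg (A * p - 1), sq_nonneg (d - 1)])
      (by positivity)
  have b6 : (-A2) * (1 / 4 * d ^ 2) ≤ (-A2) * (4 * (1 + W)) :=
    mul_le_mul_of_nonneg_left (by linarith) (by linarith)
  have b7 : 0 ≤ A * p ^ 2 := by positivity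
  have b8 : 0 ≤ A * φ := by positivity
  nlinarith

theorem heavy_ball_gradient_integrable
    {H : Type*} [NormedAddCommGroup H] [InnerProductSpace ℝ H] [CompleteSpace H]
    (c α : ℝ) (hc : 0 < c) (hα0 : 0 ≤ α) (hα1 : α < 1)
    (Φ : H → ℝ) (Φ' : H → H) (Φstar : ℝ)
    (hΦconv : ConvexOn ℝ Set.univ Φ)
    (hΦdiff : ∀ u : H, HasGradientAt Φ (Φ' u) u)
    (hΦcont : Continuous Φ')
    (hargmin : {v : H | ∀ u, Φ v ≤ Φ u}.Nonempty)
    (hΦstar : ∀ v ∈ {v : H | ∀ u, Φ v ≤ Φ u}, Φ v = Φstar)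
    (g : ℝ → H) (hg : IntegrableOn g (Ici (0:ℝ)))
    (x x' x'' : ℝ → H)
    (hx1 : ∀ t ∈ Ici (0:ℝ), HasDerivAt x (x' t) t)
    (hx2 : ∀ t ∈ Ici (0:ℝ), HasDerivAt x' (x'' t) t)
    (hode : ∀ t ∈ Ici (0:ℝ),
      x'' t + (c / (1 + t) ^ α) • x' t + Φ' (x t) = g t)
    (hgα : IntegrableOn (fun t => (1 + t) ^ α * ‖g t‖) (Ici (0:ℝ)))
    (hint : (interior {v : H | ∀ u, Φ v ≤ Φ u}).Nonempty) :
    IntegrableOn (fun t => (c / (1 + t) ^ α)⁻¹ * ‖Φ' (x t)‖) (Ici (0:ℝ)) := by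
  obtain ⟨z, hz⟩ := hint
  obtain ⟨r, hr, hball⟩ := Metric.isOpen_iff.1 isOpen_interior z hz
  have hball' : ∀ p, dist p z < r → Φ p = Φstar := fun p hp =>
    hΦstar p (interior_subset (hball hp))
  have hmin : ∀ u, Φstar ≤ Φ u := by
    intro u
    rw [← hΦstar z (interior_subset hz)]
    exact (interior_subset hz : z ∈ {v : H | ∀ u, Φ v ≤ Φ u}) u
  have hkey : ∀ u, (Φ u - Φstar) + r / 2 * ‖Φ' u‖ ≤ ⟪Φ' u, u - z⟫ := by
    intro u
    have hp : dist (z + (r / 2 / ‖Φ' u‖) • Φ' u) z < r := by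
      rw [dist_eq_norm, add_sub_cancel_left, norm_smul, norm_div, norm_norm,
        Real.norm_of_nonneg (by positivity : (0:ℝ) ≤ r / 2)]
      rcases eq_or_ne ‖Φ' u‖ 0 with h | h
      · rw [h]; simpa using hr
      · rw [div_mul_cancel₀ _ h]; linarith
    have h1 := hb_grad_ineq Φ hΦconv u (Φ' u) (z + (r / 2 / ‖Φ' u‖) • Φ' u) (hΦdiff u)
    rw [hball' _ hp] at h1
    have h2 : ⟪Φ' u, z + (r / 2 / ‖Φ' u‖) • Φ' u - u⟫ = r / 2 * ‖Φ' u‖ - ⟪Φ' u, u - z⟫ := by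
      rw [show z + (r / 2 / ‖Φ' u‖) • Φ' u - u = (r / 2 / ‖Φ' u‖) • Φ' u - (u - z) by abel,
        inner_sub_right, inner_smul_right, real_inner_self_eq_norm_sq]
      rcases eq_or_ne ‖Φ' u‖ 0 with h | h
      · rw [h]; simp
      · field_simp
    linarith
  -- weights
  set A : ℝ → ℝ := fun t => (1 + t) ^ α / c with hA
  set A1 : ℝ → ℝ := fun t => α * (1 + t) ^ (α - 1) / c with hA1
  set A2 : ℝ → ℝ := fun t => α * ((α - 1) * (1 + t) ^ (α - 1 - 1)) / c with hA2
  have hdA : ∀ t ∈ Ici (0:ℝ), HasDerivAt A (A1 t) t := by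
    intro t ht
    have ht' : (0:ℝ) ≤ t := ht
    have h := (((hasDerivAt_id t).const_add 1).rpow_const (p := α)
      (Or.inl (by simp; positivity))).div_const c
    refine h.congr_deriv ?_
    simp [hA1]
  have hdA1 : ∀ t ∈ Ici (0:ℝ), HasDerivAt A1 (A2 t) t := by
    intro t ht
    have ht' : (0:ℝ) ≤ t := ht
    have h := ((((hasDerivAt_id t).const_add 1).rpow_const (p := α - 1)
      (Or.inl (by simp; positivity))).const_mul α).div_const c
    refine h.congr_deriv ?_
    simp [hA2]
  have hApos : ∀ t ∈ Ici (0:ℝ), 0 < A t := by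
    intro t ht
    have ht' : (0:ℝ) ≤ t := ht
    simp only [hA]; positivity
  have hA1pos : ∀ t ∈ Ici (0:ℝ), 0 ≤ A1 t := by
    intro t ht
    have ht' : (0:ℝ) ≤ t := ht
    simp only [hA1]; positivity
  have hA2neg : ∀ t ∈ Ici (0:ℝ), A2 t ≤ 0 := by
    intro t ht
    have ht' : (0:ℝ) ≤ t := ht
    have : 0 ≤ α * ((1 - α) * (1 + t) ^ (α - 1 - 1)) / c := by
      have : 0 < 1 - α := by linarith
      positivity
    simp only [hA2]
    have e : α * ((α - 1) * (1 + t) ^ (α - 1 - 1)) / c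
      = -(α * ((1 - α) * (1 + t) ^ (α - 1 - 1)) / c) := by ring
    rw [e]; linarith
  have hA2int : IntegrableOn A2 (Ici (0:ℝ)) := by
    rw [integrableOn_Ici_iff_integrableOn_Ioi]
    have := integrableOn_add_rpow_Ioi_of_lt (a := α - 1 - 1) (c := 0) (m := 1)
      (by linarith) (by norm_num)
    have := ((this.const_mul (α - 1)).const_mul α).div_const c
    simpa only [hA2, add_comm, IntegrableOn] using this
  obtain ⟨T, hT0, hT⟩ : ∃ T, 0 ≤ T ∧ ∀ t, T ≤ t → A1 t ≤ 1 / 8 := by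
    have h1 : Tendsto (fun t : ℝ => (1 + t) ^ (-(1 - α))) atTop (nhds 0) :=
      (tendsto_rpow_neg_atTop (by linarith)).comp (tendsto_atTop_add_const_left _ 1 tendsto_id)
    have h2 : Tendsto A1 atTop (nhds 0) := by
      have := (h1.const_mul α).div_const c
      simpa [hA1] using this
    obtain ⟨T, hT⟩ := eventually_atTop.1
      ((h2.eventually (gt_mem_nhds (by norm_num : (0:ℝ) < 1 / 8))).and (eventually_ge_atTop 0))
    exact ⟨T, (hT T le_rfl).2, fun t ht => (hT t ht).1.le⟩
  have hsub : Ici T ⊆ Ici (0:ℝ) := fun t ht => le_trans hT0 ht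
  have hγ : ∀ t ∈ Ici (0:ℝ), A t * (c / (1 + t) ^ α) = 1 := by
    intro t ht
    have ht' : (0:ℝ) ≤ t := ht
    have : (1 + t) ^ α ≠ 0 := by positivity
    simp only [hA]; field_simp
  have hqc : ContinuousOn (fun t => A t * ‖Φ' (x t)‖) (Ici (0:ℝ)) := fun t ht =>
    ((hdA t ht).continuousAt.mul
      ((hΦcont.continuousAt.comp (hx1 t ht).continuousAt).norm)).continuousWithinAt
  have hmain : IntegrableOn (fun t => r / 2 / 2 * (A t * ‖Φ' (x t)‖)) (Ioi T) := by
    have hlow : ∀ t ∈ Ici T, _ := fun t ht =>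
      hb_lower_s17 (A t) (A1 t) ‖x' t‖ ‖x t - z‖ (Φ (x t) - Φstar) ⟪x' t, x t - z⟫
        (hApos t (hsub ht)) (hA1pos t (hsub ht)) (hT t ht) (sub_nonneg.2 (hmin _))
        (norm_nonneg _) (norm_nonneg _) (abs_real_inner_le_norm _ _)
    refine hb_gronwall_s17 T
      (fun t => A t ^ 2 * (1 / 2 * ‖x' t‖ ^ 2 + (Φ (x t) - Φstar))
        + 1 / 2 * (1 / 2 * ‖x t - z‖ ^ 2 + A t * ⟪x' t, x t - z⟫ - A1 t * (1 / 2 * ‖x t - z‖ ^ 2)))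
      (fun t => 2 * A t * A1 t * (1 / 2 * ‖x' t‖ ^ 2 + (Φ (x t) - Φstar))
        + A t ^ 2 * (⟪x'' t, x' t⟫ + ⟪Φ' (x t), x' t⟫)
        + 1 / 2 * (⟪x' t, x t - z⟫ + (A1 t * ⟪x' t, x t - z⟫
          + A t * (⟪x'' t, x t - z⟫ + ‖x' t‖ ^ 2))
          - (A2 t * (1 / 2 * ‖x t - z‖ ^ 2) + A1 t * ⟪x' t, x t - z⟫)))
      (fun t => 8 * (A t * ‖g t‖) + 4 * (-A2 t)) _ ?_ ?_ ?_ ?_ ?_ ?_ ?_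
    · intro t ht
      exact le_trans (by positivity) (hlow t ht).1
    · intro t ht
      have d1 := hdA t (hsub ht)
      have d2 := hdA1 t (hsub ht)
      have d3 := hx1 t (hsub ht)
      have d4 := hx2 t (hsub ht)
      have d5 : HasDerivAt (fun s => Φ (x s)) ⟪Φ' (x t), x' t⟫ t := by
        exact ((hΦdiff (x t)).hasFDerivAt.comp_hasDerivAt t d3).congr_deriv (by simp)
      have d6 := d3.sub_const z
      have d7 := d6.norm_sq
      have d8 := d4.norm_sq
      have d9 := d4.inner ℝ d6
      have D := ((d1.pow 2).mul ((d8.const_mul (1 / 2)).add (d5.sub_const Φstar))).add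
        ((((d7.const_mul (1 / 2)).add (d1.mul d9)).sub
          (d2.mul (d7.const_mul (1 / 2)))).const_mul (1 / 2))
      refine D.congr_deriv ?_
      simp only [real_inner_self_eq_norm_sq, real_inner_comm (x' t) (x'' t),
        real_inner_comm (x' t) (x t - z), Pi.add_apply, Pi.pow_apply]
      push_cast
      ring
    · refine IntegrableOn.mono_set ?_ hsub
      refine Integrable.add ?_ ((hA2int.neg).const_mul 4)
      refine Integrable.const_mul ?_ 8
      have := hgα.div_const c
      refine this.congr (Eventually.of_forall fun t => ?_)
      simp only [hA]; ring
    · intro t ht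
      have := hApos t (hsub ht)
      have := hA2neg t (hsub ht)
      have : 0 ≤ A t * ‖g t‖ := by positivity
      linarith
    · exact continuousOn_const.mul (hqc.mono hsub)
    · intro t ht
      have := hApos t (hsub ht)
      positivity
    · intro t ht
      have hw : x'' t = g t - (c / (1 + t) ^ α) • x' t - Φ' (x t) := by
        rw [← hode t (hsub ht)]; abel
      refine hb_upper_s17 (A t) (A1 t) (A2 t) (c / (1 + t) ^ α) ‖x' t‖ ‖x t - z‖ (Φ (x t) - Φstar)
        ‖g t‖ ‖Φ' (x t)‖ (r / 2) ⟪x' t, x t - z⟫ ⟪g t, x' t⟫ ⟪g t, x t - z⟫ ⟪Φ' (x t), x' t⟫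
        ⟪Φ' (x t), x t - z⟫ ⟪x'' t, x' t⟫ ⟪x'' t, x t - z⟫ _
        (hApos t (hsub ht)) (hA1pos t (hsub ht)) (hT t ht) (hA2neg t (hsub ht)) (hγ t (hsub ht))
        (sub_nonneg.2 (hmin _)) (norm_nonneg _) (norm_nonneg _) (norm_nonneg _)
        (real_inner_le_norm _ _) (real_inner_le_norm _ _) (hkey _) ?_ ?_
        (hlow t ht).1 (hlow t ht).2
      · rw [hw, inner_sub_left, inner_sub_left, real_inner_smul_left, real_inner_self_eq_norm_sq]
      · rw [hw, inner_sub_left, inner_sub_left, real_inner_smul_left]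
  have hmain' : IntegrableOn (fun t => A t * ‖Φ' (x t)‖) (Ioi T) := by
    have := hmain.const_mul (r / 2 / 2)⁻¹
    refine this.congr (Eventually.of_forall fun t => ?_)
    simp only
    rw [inv_mul_cancel_left₀ (by positivity)]
  have hcomp : IntegrableOn (fun t => A t * ‖Φ' (x t)‖) (Icc 0 T) :=
    (hqc.mono fun t ht => ht.1).integrableOn_Icc
  have hall := hcomp.union hmain'
  rw [Icc_union_Ioi_eq_Ici hT0] at hall
  refine hall.congr (Eventually.of_forall fun t => ?_)
  simp only [hA, inv_div]
end

section
/- Let Φ : H → ℝ be a convex C¹ function and suppose the closed ball of center z₀ and radius r > 0 is contained in argmin Φ. Then for every z ∈ H, ⟨∇Φ(z), z − z₀⟩ ≥ r ‖∇Φ(z)‖. -/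
open MeasureTheory Filter Real Set RealInnerProductSpace

theorem gradient_inner_lower_bound
    {H : Type*} [NormedAddCommGroup H] [InnerProductSpace ℝ H] [CompleteSpace H]
    (Φ : H → ℝ) (Φ' : H → H)
    (hΦconv : ConvexOn ℝ Set.univ Φ)
    (hΦdiff : ∀ u : H, HasGradientAt Φ (Φ' u) u)
    (hΦcont : Continuous Φ')
    (z₀ : H) (r : ℝ) (hr : 0 < r)
    (hball : Metric.closedBall z₀ r ⊆ {v : H | ∀ u, Φ v ≤ Φ u}) :
    ∀ z : H, r * ‖Φ' z‖ ≤ ⟪Φ' z, z - z₀⟫ := by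
  intro z
  have key : ∀ w ∈ Metric.closedBall z₀ r, ⟪Φ' z, w - z⟫ ≤ 0 := by
    intro w hw
    have hmin := hball hw
    have hmax : IsLocalMaxOn Φ (segment ℝ z w) z := by
      refine IsMaxOn.localize ?_
      intro y hy
      have h := hΦconv.le_on_segment (Set.mem_univ z) (Set.mem_univ w) hy
      rwa [max_eq_left (hmin z)] at h
    have h := hmax.hasFDerivWithinAt_nonpos (hΦdiff z).hasFDerivAt.hasFDerivWithinAt
      (sub_mem_posTangentConeAt_of_segment_subset (subset_refl (segment ℝ z w)))
    simpa using h
  by_cases hg : Φ' z = 0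
  · simp [hg]
  have hn : 0 < ‖Φ' z‖ := norm_pos_iff.mpr hg
  have h := key (z₀ + (r / ‖Φ' z‖) • Φ' z) (by
    rw [Metric.mem_closedBall, dist_eq_norm, add_sub_cancel_left, norm_smul, Real.norm_eq_abs,
      abs_of_pos (div_pos hr hn), div_mul_cancel₀ _ hn.ne'])
  have e : z₀ + (r / ‖Φ' z‖) • Φ' z - z = (r / ‖Φ' z‖) • Φ' z - (z - z₀) := by abel
  rw [e, inner_sub_right, inner_smul_right, real_inner_self_eq_norm_sq] at h
  have e2 : r / ‖Φ' z‖ * ‖Φ' z‖ ^ 2 = r * ‖Φ' z‖ := by field_simp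
  linarith
end
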